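/- arXiv:2409.00943 — 2 statements merged into one kernel-verified Lean document; each statement's English description precedes it below -/
import Mathlib

section
/- Let n ≥ 3, n ≥ m ≥ 1, and let λ = (λ_1, ..., λ_k) be a partition of n+m+1 with λ_k = λ_{k−1} = 1. For any partial order on the vertices of the generalized spider GS_{n,(2,1^{m−1})} in which nonadjacent vertices are comparable, every special rim hook GS_{n,(2,1^{m−1})}-tabloid T of shape λ has at least one body vertex appearing in its tail; that is, the tail of T cannot contain only pendants. -/
open scoped Classical

/-! ### Cells and Young diagrams -/

/-- A cell of a Young diagram: `(row, column)`, both 0-indexed, rows from the top. -/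
abbrev Cell : Type := ℕ × ℕ

/-- The length of row `i` (0-indexed from the top) of the Young diagram of the
partition `lam`, whose parts are arranged in weakly decreasing order. -/
def rowLen {N : ℕ} (lam : Nat.Partition N) (i : ℕ) : ℕ :=
  ((lam.parts.sort (· ≤ ·)).reverse).getD i 0

/-- The Young diagram of a partition, as a set of cells. -/
def diag {N : ℕ} (lam : Nat.Partition N) : Set Cell :=
  {c : Cell | c.2 < rowLen lam c.1}

/-- The number of rows (the length) of a partition. -/
def numRows {N : ℕ} (lam : Nat.Partition N) : ℕ := Multiset.card lam.parts

/-! ### Chromatic symmetric functions and Schur functions, as monomial-coefficient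
functions.  A formal power series of bounded degree in the commuting variables
`x_0, x_1, x_2, …` is recorded by the map sending an exponent vector `μ : ℕ → ℕ`
(only finitely many nonzero entries ever matter) to the coefficient of the monomial
`∏ i, x_i ^ μ i`.  Colors / tableau entries are positive integers, so the variable
`x_0` is never used. -/

/-- A proper coloring of `G` by positive integers. -/
def IsProperColoring {V : Type*} (G : SimpleGraph V) (f : V → ℕ) : Prop :=
  (∀ v, 0 < f v) ∧ ∀ u v, G.Adj u v → f u ≠ f v

/-- The coefficient of the monomial `∏ i, x_i ^ μ i` in the chromatic symmetric
function `X_G = ∑_{proper colorings f} ∏_{v} x_{f v}`. -/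
noncomputable def XCoeff {V : Type*} [Fintype V] (G : SimpleGraph V) (μ : ℕ → ℕ) : ℚ :=
  Nat.card {f : V → ℕ //
    IsProperColoring G f ∧ ∀ i, Nat.card {v : V // f v = i} = μ i}

/-- A semistandard Young tableau of shape `lam`: positive entries on the diagram
(normalized to `0` off the diagram), weakly increasing along rows, strictly
increasing down columns. -/
def IsSSYT {N : ℕ} (lam : Nat.Partition N) (t : Cell → ℕ) : Prop :=
  (∀ c, c ∉ diag lam → t c = 0) ∧ (∀ c ∈ diag lam, 0 < t c) ∧
  (∀ i j : ℕ, ((i, j + 1) : Cell) ∈ diag lam → t (i, j) ≤ t (i, j + 1)) ∧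
  (∀ i j : ℕ, ((i + 1, j) : Cell) ∈ diag lam → t (i, j) < t (i + 1, j))

/-- The coefficient of the monomial `∏ i, x_i ^ μ i` in the Schur function `s_lam`,
i.e. the number of SSYT of shape `lam` and weight `μ`. -/
noncomputable def schurFn {N : ℕ} (lam : Nat.Partition N) (μ : ℕ → ℕ) : ℚ :=
  Nat.card {t : Cell → ℕ // IsSSYT lam t ∧
    ∀ i, Nat.card {c : Cell // c ∈ diag lam ∧ t c = i} = μ i}

/-- The coefficient `[s_lam] f` of the Schur function `s_lam` in the (unique, when it
exists) expansion `f = ∑_{ν ⊢ N} c_ν s_ν` of a symmetric function `f`, homogeneous of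
degree `N`, given by its monomial coefficients. -/
noncomputable def sCoeff {N : ℕ} (f : (ℕ → ℕ) → ℚ) (lam : Nat.Partition N) : ℚ :=
  if h : ∃ c : Nat.Partition N →₀ ℚ, ∀ μ, f μ = c.sum fun ν a => a * schurFn ν μ
  then h.choose lam else 0

/-! ### Graphs: generalized nets, generalized spiders, disjoint unions -/

/-- The generalized net `GN_{n,m}`: the complete graph on the body `Fin n`, with a
pendant (`Sum.inr j`) attached to the anchor `Sum.inl j` for each `j : Fin m`. -/
def genNet (n m : ℕ) : SimpleGraph (Fin n ⊕ Fin m) :=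
  SimpleGraph.fromRel fun a b =>
    match a, b with
    | Sum.inl _, Sum.inl _ => True
    | Sum.inl i, Sum.inr j => (i : ℕ) = (j : ℕ)
    | Sum.inr _, _ => False

/-- The generalized spider `GS_{n,(2,1^{m-1})}`: the complete graph on the body
`Fin n`, a pendant `Sum.inr (Sum.inl j)` attached to the body vertex `Sum.inl j` for
each `j : Fin m`, and one extra vertex `Sum.inr (Sum.inr 0)` (the special pendant)
attached to the pendant `Sum.inr (Sum.inl 0)`, so that the body vertex `0` (the
special anchor) carries an attached path on two vertices. -/
def genSpider2 (n m : ℕ) : SimpleGraph (Fin n ⊕ (Fin m ⊕ Fin 1)) :=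
  SimpleGraph.fromRel fun a b =>
    match a, b with
    | Sum.inl _, Sum.inl _ => True
    | Sum.inl i, Sum.inr (Sum.inl j) => (i : ℕ) = (j : ℕ)
    | Sum.inr (Sum.inl j), Sum.inr (Sum.inr _) => (j : ℕ) = 0
    | _, _ => False

/-- Disjoint union of two simple graphs. -/
def disjUnion {α β : Type*} (G : SimpleGraph α) (H : SimpleGraph β) :
    SimpleGraph (α ⊕ β) :=
  SimpleGraph.fromRel fun a b =>
    match a, b with
    | Sum.inl a, Sum.inl b => G.Adj a b
    | Sum.inr a, Sum.inr b => H.Adj a b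
    | _, _ => False

/-- The one-vertex graph `K_1`. -/
def K1 : SimpleGraph (Fin 1) := ⊥

/-- The path (= complete graph) on two vertices `P_2`. -/
def P2 : SimpleGraph (Fin 2) := ⊤

/-! ### Operations on partitions -/

/-- `removeOnes lam t` is the partition `lam ∖ 1^t` obtained by deleting `t` parts
equal to `1` from `lam` (junk value if `lam` has fewer than `t` parts equal to `1`). -/
def removeOnes {N : ℕ} (lam : Nat.Partition N) (t : ℕ) : Nat.Partition (N - t) :=
  if h : Multiset.replicate t 1 ≤ lam.parts then
    { parts := lam.parts - Multiset.replicate t 1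
      parts_pos := fun hx =>
        lam.parts_pos (Multiset.mem_of_le (tsub_le_self) hx)
      parts_sum := by
        have h1 : (lam.parts - Multiset.replicate t 1) + Multiset.replicate t 1
            = lam.parts := tsub_add_cancel_of_le h
        have h2 := congrArg Multiset.sum h1
        rw [Multiset.sum_add, Multiset.sum_replicate, lam.parts_sum] at h2
        simp only [smul_eq_mul, mul_one] at h2
        omega }
  else Nat.Partition.indiscrete (N - t)

/-- The partition `(2^a, 1^b)` of `2*a + b`. -/
def twoOne (a b : ℕ) : Nat.Partition (2 * a + b) where
  parts := Multiset.replicate a 2 + Multiset.replicate b 1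
  parts_pos := by
    intro i hi
    rw [Multiset.mem_add] at hi
    rcases hi with hi | hi <;> · rw [Multiset.eq_of_mem_replicate hi]; omega
  parts_sum := by
    rw [Multiset.sum_add, Multiset.sum_replicate, Multiset.sum_replicate]
    simp only [smul_eq_mul, mul_one]
    omega

/-! ### Special rim hook `G`-tabloids -/

/-- Two cells are adjacent if they share an edge. -/
def cellAdj (c d : Cell) : Prop :=
  (c.1 = d.1 ∧ (c.2 + 1 = d.2 ∨ d.2 + 1 = c.2)) ∨
  (c.2 = d.2 ∧ (c.1 + 1 = d.1 ∨ d.1 + 1 = c.1))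

/-- A set of cells is (the diagram of) a Young diagram if it is closed under
decreasing either coordinate. -/
def IsYoungDiag (D : Set Cell) : Prop :=
  ∀ i j i' j' : ℕ, ((i, j) : Cell) ∈ D → i' ≤ i → j' ≤ j → ((i', j') : Cell) ∈ D

/-- A set of cells is connected (via edge-adjacency, within the set). -/
def CellConnected (S : Set Cell) : Prop :=
  ∀ c ∈ S, ∀ d ∈ S, Relation.ReflTransGen (fun a b => a ∈ S ∧ b ∈ S ∧ cellAdj a b) c d

/-- A border strip (= rim hook, as a set of cells): nonempty, connected, and
containing no 2×2 square of cells. -/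
def IsBorderStrip (H : Set Cell) : Prop :=
  H.Nonempty ∧ CellConnected H ∧
    ∀ i j : ℕ, ¬(((i, j) : Cell) ∈ H ∧ ((i + 1, j) : Cell) ∈ H ∧
      ((i, j + 1) : Cell) ∈ H ∧ ((i + 1, j + 1) : Cell) ∈ H)

/-- `H` is a rim hook of the Young diagram `D`: a border strip contained in `D`
whose removal leaves a Young diagram. -/
def IsRimHookOf (D H : Set Cell) : Prop :=
  H ⊆ D ∧ IsBorderStrip H ∧ IsYoungDiag (D \ H)

/-- `IsRemovalSeq L D` says that the sets of cells in the list `L` may be removed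
successively from the diagram `D`, each being a rim hook of what remains, with
nothing left at the end. -/
def IsRemovalSeq : List (Set Cell) → Set Cell → Prop
  | [], D => D = ∅
  | H :: L, D => IsRimHookOf D H ∧ IsRemovalSeq L (D \ H)

/-- A special rim hook `G`-tabloid of shape `lam`, with respect to an order `r` on
the vertices of `G`: the cells of the diagram of `lam` are filled bijectively with
the vertices of `G` (vertex `v` goes in cell `pos v`), and the diagram is tiled by
rim hooks, successively removable, each meeting the first column.  The rim hooks are
recorded by the labelling `hk`, which assigns to each vertex the topmost row in which
its rim hook meets the first column.  The vertices in each rim hook form a stable set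
of `G` and, read from the rim hook's (bottom) cell in the first column — i.e. in
increasing order of the diagonal index `column − row` — they increase with respect
to `r`. -/
structure SRHGTabloid {V : Type*} (G : SimpleGraph V) (r : V → V → Prop)
    {N : ℕ} (lam : Nat.Partition N) where
  /-- the cell occupied by each vertex -/
  pos : V → Cell
  /-- the label of the rim hook containing each vertex: the topmost row in which
  that rim hook meets the first column -/
  hk : V → ℕ
  pos_inj : Function.Injective pos
  pos_range : Set.range pos = diag lam
  hk_mem : ∀ v, ((hk v, 0) : Cell) ∈ pos '' {u | hk u = hk v}
  hk_min : ∀ v i, ((i, 0) : Cell) ∈ pos '' {u | hk u = hk v} → hk v ≤ i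
  removal : ∃ L : List ℕ, L.Nodup ∧ (∀ i, i ∈ L ↔ ∃ v, hk v = i) ∧
    IsRemovalSeq (L.map fun i => pos '' {u | hk u = i}) (diag lam)
  stable : ∀ u v, hk u = hk v → u ≠ v → ¬G.Adj u v
  increasing : ∀ u v, hk u = hk v →
    ((pos u).2 : ℤ) - ((pos u).1 : ℤ) < ((pos v).2 : ℤ) - ((pos v).1 : ℤ) → r u v

/-- The sign of a special rim hook `G`-tabloid: `(-1)` to the total number of north
steps, where a rim hook spanning `k` rows contributes `k - 1` north steps. -/
noncomputable def tabSign {V : Type*} {G : SimpleGraph V} {r : V → V → Prop}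
    {N : ℕ} {lam : Nat.Partition N} (T : SRHGTabloid G r lam) : ℤ :=
  (-1) ^ ∑ i ∈ Finset.range N,
    ({a : ℕ | ∃ v, T.hk v = i ∧ (T.pos v).1 = a}.ncard - 1)

/-- The cells of the head of a tabloid of shape `lam`: the rows of length `≥ 2`. -/
def headCells {N : ℕ} (lam : Nat.Partition N) : Set Cell :=
  {c : Cell | c ∈ diag lam ∧ 2 ≤ rowLen lam c.1}

/-- The cells of the tail of a tabloid of shape `lam`: the rows of length `1`. -/
def tailCells {N : ℕ} (lam : Nat.Partition N) : Set Cell :=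
  {c : Cell | c ∈ diag lam ∧ rowLen lam c.1 = 1}

/-- Two special rim hook `G`-tabloids have the same head: the same cells of the head
are occupied by the same vertices, and the rim hook structure restricted to the head
agrees. -/
def SameHead {V : Type*} {G : SimpleGraph V} {r : V → V → Prop} {N : ℕ}
    {lam : Nat.Partition N} (T T' : SRHGTabloid G r lam) : Prop :=
  (∀ v, T.pos v ∈ headCells lam ↔ T'.pos v ∈ headCells lam) ∧
  (∀ v, T.pos v ∈ headCells lam → T.pos v = T'.pos v) ∧
  (∀ u v, T.pos u ∈ headCells lam → T.pos v ∈ headCells lam →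
    (T.hk u = T.hk v ↔ T'.hk u = T'.hk v))

theorem removalSeq_conn : ∀ (L : List (Set Cell)) (D : Set Cell), IsRemovalSeq L D →
    ∀ H ∈ L, CellConnected H
  | [], _, _, H, hH => by simp at hH
  | K :: L, D, h, H, hH => by
    obtain ⟨h1, h2⟩ := h
    rcases List.mem_cons.1 hH with rfl | hH
    · exact h1.2.1.2.1
    · exact removalSeq_conn L _ h2 H hH

theorem list_count_bound (l : List ℕ) :
    2 * ((Finset.range l.length).filter (fun i => 2 ≤ l.getD i 0)).card + l.count 1
      ≤ l.sum := by
  induction l using List.reverseRecOn with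
  | nil => simp
  | append_singleton l a ih =>
    have h1 : (Finset.range l.length).filter (fun i => 2 ≤ (l ++ [a]).getD i 0)
        = (Finset.range l.length).filter (fun i => 2 ≤ l.getD i 0) := by
      apply Finset.filter_congr
      intro i hi
      rw [List.getD_append _ _ _ _ (Finset.mem_range.1 hi)]
    have h2 : (l ++ [a]).getD l.length 0 = a := by simp
    rw [List.length_append, List.length_singleton, Finset.range_add_one,
      Finset.filter_insert, h1, h2, List.count_append, List.sum_append]
    simp only [List.sum_singleton, List.count_singleton]
    have hS : l.length ∉ (Finset.range l.length).filter (fun i => 2 ≤ l.getD i 0) := by simp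
    generalize ((Finset.range l.length).filter (fun i => 2 ≤ l.getD i 0)) = S at ih hS ⊢
    by_cases ha : 2 ≤ a
    · have h3 : a ≠ 1 := by omega
      rw [if_pos ha, Finset.card_insert_of_notMem hS]
      simp [h3]
      omega
    · rw [if_neg ha]
      by_cases h3 : a = 1
      · simp [h3]; omega
      · simp [h3]; omega

theorem rowLen_antitone {N : ℕ} (lam : Nat.Partition N) {i j : ℕ} (hij : i ≤ j) :
    rowLen lam j ≤ rowLen lam i := by
  unfold rowLen
  have hs : ((lam.parts.sort (· ≤ ·)).reverse).Pairwise (fun a b => b ≤ a) := by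
    rw [List.pairwise_reverse]
    exact Multiset.pairwise_sort _ _
  generalize (lam.parts.sort (· ≤ ·)).reverse = l at hs
  rcases hij.eq_or_lt with rfl | hij
  · exact le_rfl
  by_cases hj : j < l.length
  · rw [List.getD_eq_getElem _ _ hj, List.getD_eq_getElem _ _ (hij.trans hj)]
    exact List.pairwise_iff_getElem.1 hs i j _ _ hij
  · rw [List.getD_eq_default _ _ (by omega)]
    exact Nat.zero_le _

theorem tabloid_hk_head {V : Type*} {G : SimpleGraph V} {r : V → V → Prop} {N : ℕ}
    {lam : Nat.Partition N} (T : SRHGTabloid G r lam) (v : V)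
    (hv : 2 ≤ rowLen lam (T.pos v).1) : 2 ≤ rowLen lam (T.hk v) := by
  by_contra hlt
  obtain ⟨L, -, hL, hrem⟩ := T.removal
  have hc : CellConnected (T.pos '' {u | T.hk u = T.hk v}) :=
    removalSeq_conn _ _ hrem _ (List.mem_map.2 ⟨T.hk v, (hL _).2 ⟨v, rfl⟩, rfl⟩)
  have hpath := hc _ (T.hk_mem v) (T.pos v) ⟨v, rfl, rfl⟩
  have key : ∀ d, Relation.ReflTransGen (fun a b => a ∈ T.pos '' {u | T.hk u = T.hk v} ∧
      b ∈ T.pos '' {u | T.hk u = T.hk v} ∧ cellAdj a b) (T.hk v, 0) d →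
      rowLen lam d.1 ≤ 1 := by
    intro d hd
    induction hd with
    | refl => show rowLen lam (T.hk v) ≤ 1; omega
    | tail _ hbc ih =>
      rename_i b c _
      obtain ⟨hb, hcm, hadj⟩ := hbc
      rcases hadj with ⟨h1, -⟩ | ⟨h1, -⟩
      · rw [← h1]; exact ih
      · have hbd : b ∈ diag lam := by
          rw [← T.pos_range]
          exact Set.image_subset_range _ _ hb
        have hb2 : b.2 < rowLen lam b.1 := hbd
        have hc0 : c = (c.1, 0) := Prod.ext rfl (by show c.2 = 0; omega)
        rw [hc0] at hcm
        have := rowLen_antitone lam (T.hk_min v _ hcm)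
        omega
  have := key _ hpath
  omega

/-- For `n ≥ 3`, `n ≥ m ≥ 1`, and a partition `lam` of `n + m + 1`
whose last two parts equal `1`, for any partial order on the vertices of the
generalized spider `GS_{n,(2,1^{m-1})}` in which nonadjacent vertices are comparable,
every special rim hook `GS_{n,(2,1^{m-1})}`-tabloid of shape `lam` has at least one
body vertex in its tail (the rows of length `1`); the tail cannot contain only
pendants. -/
theorem tail_not_only_pendants_genSpider (n m : ℕ) (hn : 3 ≤ n) (hm : 1 ≤ m)
    (hmn : m ≤ n)
    (lam : Nat.Partition (n + m + 1)) (hones : 2 ≤ lam.parts.count 1)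
    (po : PartialOrder (Fin n ⊕ (Fin m ⊕ Fin 1)))
    (hcomp : ∀ u v, ¬(genSpider2 n m).Adj u v → po.le u v ∨ po.le v u)
    (T : SRHGTabloid (genSpider2 n m) po.le lam) :
    ∃ v : Fin n, rowLen lam (T.pos (Sum.inl v)).1 = 1 := by
  by_contra hno
  push Not at hno
  have hhead : ∀ v : Fin n, 2 ≤ rowLen lam (T.hk (Sum.inl v)) := by
    intro v
    apply tabloid_hk_head
    have hd : T.pos (Sum.inl v) ∈ diag lam := by
      rw [← T.pos_range]; exact ⟨_, rfl⟩
    have hd' : (T.pos (Sum.inl v)).2 < rowLen lam (T.pos (Sum.inl v)).1 := hd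
    have := hno v
    omega
  have hinj : Function.Injective (fun v : Fin n => T.hk (Sum.inl v)) := by
    intro u v huv
    by_contra hne
    have hne' : (Sum.inl u : Fin n ⊕ (Fin m ⊕ Fin 1)) ≠ Sum.inl v := by simpa using hne
    exact T.stable _ _ huv hne' (by
      rw [genSpider2, SimpleGraph.fromRel_adj]
      exact ⟨hne', Or.inl trivial⟩)
  have hb := list_count_bound ((lam.parts.sort (· ≤ ·)).reverse)
  have hsum : ((lam.parts.sort (· ≤ ·)).reverse).sum = n + m + 1 := by
    rw [List.sum_reverse, ← Multiset.sum_coe, Multiset.sort_eq, lam.parts_sum]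
  have hcount : ((lam.parts.sort (· ≤ ·)).reverse).count 1 = lam.parts.count 1 := by
    rw [List.count_reverse, ← Multiset.coe_count, Multiset.sort_eq]
  have hcard : n ≤ ((Finset.range ((lam.parts.sort (· ≤ ·)).reverse).length).filter
      (fun i => 2 ≤ ((lam.parts.sort (· ≤ ·)).reverse).getD i 0)).card := by
    have := Finset.card_le_card_of_injOn (s := (Finset.univ : Finset (Fin n)))
      (t := (Finset.range ((lam.parts.sort (· ≤ ·)).reverse).length).filter
      (fun i => 2 ≤ ((lam.parts.sort (· ≤ ·)).reverse).getD i 0))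
      (fun v : Fin n => T.hk (Sum.inl v)) (by
        intro v _
        have h := hhead v
        unfold rowLen at h
        simp only [Finset.coe_filter, Set.mem_ofPred_eq, Finset.mem_range]
        refine ⟨?_, h⟩
        by_contra hlen
        rw [List.getD_eq_default _ _ (by omega)] at h
        omega) hinj.injOn
    simpa using this
  omega
end

section
/- For every integer n ≥ 3, f(n,0) = n(n−1)·f(n−2,0), where f(C,D) = [s_{(2^C,1^D)}] X_{GN_{C+D,C}} for C, D ≥ 0 and (2^a,1^b) denotes the partition with a parts equal to 2 followed by b parts equal to 1. -/
open scoped Classical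

/-- `f(C,D) = [s_{(2^C,1^D)}] X_{GN_{C+D,C}}`. -/
noncomputable def fCD (C D : ℕ) : ℚ :=
  sCoeff (XCoeff (genNet (C + D) C)) (twoOne C D)

/-! ### Combinatorics of interlacing sequences -/

/-- The shift of a finitely supported sequence. -/
noncomputable def shf (a : ℕ →₀ ℕ) : ℕ →₀ ℕ :=
  a.comapDomain Nat.succ (Nat.succ_injective.injOn)

theorem shf_apply (a : ℕ →₀ ℕ) (i : ℕ) : shf a i = a (i + 1) := rfl

/-- The size of a finitely supported sequence. -/
noncomputable def sz (a : ℕ →₀ ℕ) : ℕ := ∑ i ∈ a.support, a i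

theorem sz_eq (a : ℕ →₀ ℕ) (L : ℕ) (h : ∀ i, L ≤ i → a i = 0) :
    sz a = ∑ i ∈ Finset.range L, a i := by
  unfold sz
  apply Finset.sum_subset
  · intro i hi
    rw [Finsupp.mem_support_iff] at hi
    rw [Finset.mem_range]
    by_contra hc
    exact hi (h i (by omega))
  · intro i _ hi
    simpa using hi

theorem exists_bound (a : ℕ →₀ ℕ) : ∃ L, ∀ i, L ≤ i → a i = 0 := by
  refine ⟨a.support.sup id + 1, fun i hi => ?_⟩
  by_contra hc
  have := Finset.le_sup (f := id) (Finsupp.mem_support_iff.mpr hc)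
  simp at this
  omega

theorem sz_mono {a b : ℕ →₀ ℕ} (h : a ≤ b) : sz a ≤ sz b := by
  obtain ⟨L, hL⟩ := exists_bound b
  rw [sz_eq b L hL, sz_eq a L (fun i hi => Nat.le_zero.mp ((h i).trans (hL i hi).le))]
  exact Finset.sum_le_sum fun i _ => h i

theorem eq_of_le_of_sz {a b : ℕ →₀ ℕ} (h : a ≤ b) (hs : sz b ≤ sz a) : a = b := by
  obtain ⟨L, hL⟩ := exists_bound b
  have ha : ∀ i, L ≤ i → a i = 0 := fun i hi => Nat.le_zero.mp ((h i).trans (hL i hi).le)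
  rw [sz_eq b L hL, sz_eq a L ha] at hs
  have h1 : ∑ i ∈ Finset.range L, a i = ∑ i ∈ Finset.range L, b i :=
    le_antisymm (Finset.sum_le_sum fun i _ => h i) hs
  rw [Finset.sum_eq_sum_iff_of_le (fun i _ => h i)] at h1
  ext i
  by_cases hi : i < L
  · exact h1 i (Finset.mem_range.mpr hi)
  · rw [ha i (by omega), hL i (by omega)]

theorem sz_zero : sz 0 = 0 := by simp [sz]

theorem eq_zero_of_sz {a : ℕ →₀ ℕ} (h : sz a = 0) : a = 0 := by
  symm
  apply eq_of_le_of_sz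
  · intro i; simp
  · rw [h]; exact Nat.zero_le _

/-- The set of sequences interlacing `a`. -/
noncomputable def inter (a : ℕ →₀ ℕ) : Finset (ℕ →₀ ℕ) := Finset.Icc (shf a) a

theorem mem_inter {a k : ℕ →₀ ℕ} : k ∈ inter a ↔ ∀ i, a (i + 1) ≤ k i ∧ k i ≤ a i := by
  unfold inter
  rw [Finset.mem_Icc, Finsupp.le_def, Finsupp.le_def, ← forall_and]
  rfl

theorem inter_anti {a k : ℕ →₀ ℕ} (h : k ∈ inter a) : ∀ i, k (i + 1) ≤ k i := by
  rw [mem_inter] at h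
  intro i
  exact (h (i + 1)).2.trans (h i).1

theorem inter_le {a k : ℕ →₀ ℕ} (h : k ∈ inter a) : k ≤ a := by
  rw [mem_inter] at h
  exact fun i => (h i).2

theorem self_mem_inter {a : ℕ →₀ ℕ} (h : ∀ i, a (i + 1) ≤ a i) : a ∈ inter a := by
  rw [mem_inter]
  exact fun i => ⟨h i, le_rfl⟩

/-- Recursive Kostka numbers. -/
noncomputable def kos (μ : ℕ → ℕ) : ℕ → (ℕ →₀ ℕ) → ℕ
  | 0, a => if a = 0 then 1 else 0
  | M + 1, a => ∑ k ∈ (inter a).filter (fun k => sz k + μ (M + 1) = sz a), kos μ M k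

theorem kos_congr {μ μ' : ℕ → ℕ} (M : ℕ) (h : ∀ i, 1 ≤ i → i ≤ M → μ i = μ' i) :
    ∀ a, kos μ M a = kos μ' M a := by
  induction M with
  | zero => intro a; rfl
  | succ M ih =>
    intro a
    have ih' := ih (fun i h1 h2 => h i h1 (by omega))
    unfold kos
    rw [h (M + 1) (by omega) le_rfl]
    exact Finset.sum_congr rfl fun k _ => ih' k

theorem kos_exists {μ : ℕ → ℕ} {M : ℕ} {a : ℕ →₀ ℕ} (h : kos μ (M + 1) a ≠ 0) :
    ∃ k ∈ inter a, sz k + μ (M + 1) = sz a ∧ kos μ M k ≠ 0 := by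
  unfold kos at h
  obtain ⟨k, hk, hk'⟩ := Finset.exists_ne_zero_of_sum_ne_zero h
  rw [Finset.mem_filter] at hk
  exact ⟨k, hk.1, hk.2, hk'⟩

theorem kos_rows {μ : ℕ → ℕ} (M : ℕ) : ∀ a, kos μ M a ≠ 0 → ∀ i, M ≤ i → a i = 0 := by
  induction M with
  | zero =>
    intro a h i _
    by_cases ha : a = 0
    · simp [ha]
    · simp [kos, ha] at h
  | succ M ih =>
    intro a h i hi
    obtain ⟨k, hk, _, h2⟩ := kos_exists h
    obtain ⟨j, rfl⟩ : ∃ j, i = j + 1 := ⟨i - 1, by omega⟩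
    have := ih k h2 j (by omega)
    have h3 := (mem_inter.mp hk j).1
    omega

theorem kos_size {μ : ℕ → ℕ} (M : ℕ) : ∀ a, kos μ M a ≠ 0 →
    sz a = ∑ j ∈ Finset.range M, μ (j + 1) := by
  induction M with
  | zero =>
    intro a h
    by_cases ha : a = 0
    · simp [ha, sz_zero]
    · simp [kos, ha] at h
  | succ M ih =>
    intro a h
    obtain ⟨k, hk, h1, h2⟩ := kos_exists h
    rw [Finset.sum_range_succ, ← ih k h2, h1]

theorem kos_dom {μ : ℕ → ℕ} (M : ℕ) : ∀ a, kos μ M a ≠ 0 → ∀ r, r ≤ M →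
    ∑ j ∈ Finset.range r, μ (j + 1) ≤ ∑ i ∈ Finset.range r, a i := by
  induction M with
  | zero =>
    intro a h r hr
    obtain rfl : r = 0 := by omega
    simp
  | succ M ih =>
    intro a h r hr
    by_cases hr' : r = M + 1
    · subst hr'
      rw [← kos_size _ a h, sz_eq a (M + 1) (kos_rows _ a h)]
    · obtain ⟨k, hk, h1, h2⟩ := kos_exists h
      exact (ih k h2 r (by omega)).trans
        (Finset.sum_le_sum fun i _ => (mem_inter.mp hk i).2)

theorem sz_erase_last {a : ℕ →₀ ℕ} {M : ℕ} (h0 : ∀ i, M + 1 ≤ i → a i = 0) :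
    sz (a.erase M) + a M = sz a := by
  rw [sz_eq a (M + 1) h0, Finset.sum_range_succ, sz_eq (a.erase M) M]
  · congr 1
    apply Finset.sum_congr rfl
    intro i hi
    rw [Finset.mem_range] at hi
    rw [Finsupp.erase_ne (by omega)]
  · intro i hi
    by_cases h : i = M
    · subst h; simp
    · rw [Finsupp.erase_ne h, h0 i (by omega)]

theorem kos_diag {μ : ℕ → ℕ} (M : ℕ) : ∀ a : ℕ →₀ ℕ, (∀ i, a (i + 1) ≤ a i) →
    (∀ j, j < M → μ (j + 1) = a j) → (∀ i, M ≤ i → a i = 0) → kos μ M a = 1 := by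
  induction M with
  | zero =>
    intro a _ _ h0
    have : a = 0 := by ext i; simp [h0 i]
    simp [kos, this]
  | succ M ih =>
    intro a ha hμ h0
    unfold kos
    rw [Finset.sum_eq_single (a.erase M)]
    · apply ih
      · intro i
        by_cases h : i + 1 = M
        · subst h; simp
        · rw [Finsupp.erase_ne h]
          by_cases h' : i = M
          · subst h'; rw [h0 _ (by omega)]; exact Nat.zero_le _
          · rw [Finsupp.erase_ne h']; exact ha i
      · intro j hj
        rw [Finsupp.erase_ne (by omega), hμ j (by omega)]
      · intro i hi
        by_cases h : i = M
        · subst h; simp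
        · rw [Finsupp.erase_ne h, h0 i (by omega)]
    · intro k hk hne
      rw [Finset.mem_filter] at hk
      by_contra hc
      apply hne
      have hr := kos_rows M k hc
      apply eq_of_le_of_sz
      · intro i
        by_cases h : i = M
        · subst h; simp [hr]
        · rw [Finsupp.erase_ne h]; exact inter_le hk.1 i
      · have h1 := sz_erase_last h0
        have h2 := hk.2
        rw [hμ M (by omega)] at h2
        omega
    · intro hk
      exfalso
      apply hk
      rw [Finset.mem_filter]
      refine ⟨?_, ?_⟩
      · rw [mem_inter]
        intro i
        by_cases h : i = M
        · subst h; simp [h0]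
        · rw [Finsupp.erase_ne h]; exact ⟨ha i, le_rfl⟩
      · rw [hμ M (by omega)]
        exact sz_erase_last h0

/-! ### The Bender–Knuth involution -/

/-- upper bound -/
def bkU (a r : ℕ → ℕ) : ℕ → ℕ
  | 0 => a 0
  | i + 1 => min (a (i + 1)) (r i)

/-- lower bound -/
def bkL (a r : ℕ → ℕ) (i : ℕ) : ℕ := max (a (i + 1)) (r i)

theorem bk_sum (a r : ℕ → ℕ) (L : ℕ) :
    ∑ i ∈ Finset.range L, bkL a r i + ∑ i ∈ Finset.range (L + 1), bkU a r i
      = ∑ i ∈ Finset.range (L + 1), a i + ∑ i ∈ Finset.range L, r i := by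
  induction L with
  | zero => simp [bkU]
  | succ L ih =>
    rw [Finset.sum_range_succ, Finset.sum_range_succ _ (L + 1), Finset.sum_range_succ _ (L + 1),
      Finset.sum_range_succ _ L]
    have : bkL a r L + bkU a r (L + 1) = a (L + 1) + r L := by
      unfold bkL bkU
      rw [max_add_min]
    rw [Finset.sum_range_succ _ L] at ih ⊢
    rw [Finset.sum_range_succ r L]
    simp only [Finset.sum_range_succ] at ih ⊢
    omega

theorem bk_mem_iff {a k r : ℕ →₀ ℕ} : (k ∈ inter a ∧ r ∈ inter k) ↔
    ∀ i, bkL a r i ≤ k i ∧ k i ≤ bkU a r i := by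
  rw [mem_inter, mem_inter]
  constructor
  · rintro ⟨h1, h2⟩ i
    refine ⟨max_le (h1 i).1 (h2 i).2, ?_⟩
    cases i with
    | zero => exact (h1 0).2
    | succ i => exact le_min (h1 (i + 1)).2 (h2 i).1
  · intro h
    refine ⟨fun i => ⟨(le_max_left _ _).trans (h i).1, ?_⟩, fun i =>
      ⟨(h (i + 1)).2.trans (min_le_right _ _), (le_max_right _ _).trans (h i).1⟩⟩
    cases i with
    | zero => exact (h 0).2
    | succ i => exact (h (i + 1)).2.trans (min_le_left _ _)

/-- The involution. -/
noncomputable def bk (a k r : ℕ →₀ ℕ) : ℕ →₀ ℕ :=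
  Finsupp.onFinset (Finset.range ((exists_bound a).choose))
    (fun i => if i < (exists_bound a).choose then bkL a r i + bkU a r i - k i else 0) (by
      intro i hi
      rw [Finset.mem_range]
      by_contra hc
      simp [hc] at hi)

theorem bkU_le (a r : ℕ → ℕ) (i : ℕ) : bkU a r i ≤ a i := by
  cases i with
  | zero => exact le_rfl
  | succ i => exact min_le_left _ _

theorem bk_apply {a k r : ℕ →₀ ℕ} (h : ∀ i, bkL a r i ≤ k i ∧ k i ≤ bkU a r i) (i : ℕ) :
    bk a k r i = bkL a r i + bkU a r i - k i := by
  unfold bk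
  rw [Finsupp.onFinset_apply]
  split_ifs with hi
  · rfl
  · have h1 := (exists_bound a).choose_spec i (by omega)
    have h2 := bkU_le a r i
    have h3 := h i
    omega

theorem bk_mem {a k r : ℕ →₀ ℕ} (h : ∀ i, bkL a r i ≤ k i ∧ k i ≤ bkU a r i) :
    ∀ i, bkL a r i ≤ bk a k r i ∧ bk a k r i ≤ bkU a r i := by
  intro i
  rw [bk_apply h]
  have := h i
  omega

theorem bk_bk {a k r : ℕ →₀ ℕ} (h : ∀ i, bkL a r i ≤ k i ∧ k i ≤ bkU a r i) :
    bk a (bk a k r) r = k := by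
  ext i
  rw [bk_apply (bk_mem h), bk_apply h]
  have := h i
  omega

theorem bk_sz {a k r : ℕ →₀ ℕ} (h : ∀ i, bkL a r i ≤ k i ∧ k i ≤ bkU a r i) :
    sz (bk a k r) + sz k = sz a + sz r := by
  obtain ⟨L, hL⟩ := exists_bound a
  have hu : ∀ i, L ≤ i → bkU a r i = 0 := fun i hi =>
    Nat.le_zero.mp ((bkU_le a r i).trans (hL i hi).le)
  have hk : ∀ i, L ≤ i → k i = 0 := fun i hi =>
    Nat.le_zero.mp ((h i).2.trans (hu i hi).le)
  have hl : ∀ i, L ≤ i → bkL a r i = 0 := fun i hi =>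
    Nat.le_zero.mp ((h i).1.trans (hk i hi).le)
  have hr : ∀ i, L ≤ i → r i = 0 := fun i hi =>
    Nat.le_zero.mp ((le_max_right _ _).trans (hl i hi).le)
  have hb : ∀ i, L ≤ i → bk a k r i = 0 := fun i hi =>
    Nat.le_zero.mp ((bk_mem h i).2.trans (hu i hi).le)
  rw [sz_eq a (L + 1) (fun i hi => hL i (by omega)), sz_eq r L hr, sz_eq k L hk,
    sz_eq _ L hb, ← bk_sum, Finset.sum_range_succ (bkU a r), hu L le_rfl, add_zero,
    ← Finset.sum_add_distrib, ← Finset.sum_add_distrib]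
  apply Finset.sum_congr rfl
  intro i _
  rw [bk_apply h]
  have := h i
  omega

theorem kos_two (μ : ℕ → ℕ) (M : ℕ) (a : ℕ →₀ ℕ) : kos μ (M + 2) a =
    ∑ p ∈ ((inter a).sigma (fun k => inter k)).filter
      (fun p => sz p.1 + μ (M + 2) = sz a ∧ sz p.2 + μ (M + 1) = sz p.1), kos μ M p.2 := by
  simp only [kos]
  rw [Finset.sum_filter, Finset.sum_filter, Finset.sum_sigma]
  apply Finset.sum_congr rfl
  intro k _
  rw [Finset.sum_filter]
  by_cases h : sz k + μ (M + 1 + 1) = sz a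
  · simp [h]
  · simp [h]

theorem kos_swap_top (μ : ℕ → ℕ) (M : ℕ) (a : ℕ →₀ ℕ) :
    kos (μ ∘ Equiv.swap (M + 1) (M + 2)) (M + 2) a = kos μ (M + 2) a := by
  rw [kos_two, kos_two]
  have hc : ∀ b, kos (μ ∘ Equiv.swap (M + 1) (M + 2)) M b = kos μ M b := by
    apply kos_congr
    intro i h1 h2
    simp only [Function.comp]
    rw [Equiv.swap_apply_of_ne_of_ne (by omega) (by omega)]
  simp only [hc, Function.comp, Equiv.swap_apply_left, Equiv.swap_apply_right]
  have key : ∀ (x y : ℕ) (p : Sigma fun _ : ℕ →₀ ℕ => ℕ →₀ ℕ),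
      p ∈ ((inter a).sigma (fun k => inter k)).filter
      (fun p => sz p.1 + x = sz a ∧ sz p.2 + y = sz p.1) →
      (⟨bk a p.1 p.2, p.2⟩ : Sigma fun _ : ℕ →₀ ℕ => ℕ →₀ ℕ) ∈
        ((inter a).sigma (fun k => inter k)).filter
      (fun p => sz p.1 + y = sz a ∧ sz p.2 + x = sz p.1) ∧ bk a (bk a p.1 p.2) p.2 = p.1 := by
    intro x y p hp
    rw [Finset.mem_filter, Finset.mem_sigma, bk_mem_iff] at hp
    obtain ⟨hp1, hp2, hp3⟩ := hp
    rw [Finset.mem_filter, Finset.mem_sigma, bk_mem_iff]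
    have := bk_sz hp1
    refine ⟨⟨bk_mem hp1, ?_, ?_⟩, bk_bk hp1⟩
    · dsimp only; omega
    · dsimp only; omega
  apply Finset.sum_bij' (fun p _ => (⟨bk a p.1 p.2, p.2⟩ : Sigma fun _ : ℕ →₀ ℕ => ℕ →₀ ℕ))
    (fun p _ => (⟨bk a p.1 p.2, p.2⟩ : Sigma fun _ : ℕ →₀ ℕ => ℕ →₀ ℕ))
  · intro p hp; exact (key _ _ p hp).1
  · intro p hp; exact (key _ _ p hp).1
  · intro p hp
    have := (key _ _ p hp).2
    ext1
    · exact this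
    · rfl
  · intro p hp
    have := (key _ _ p hp).2
    ext1
    · exact this
    · rfl
  · intro p hp; rfl

theorem kos_swap (μ : ℕ → ℕ) (r : ℕ) (hr : 1 ≤ r) (M : ℕ) (hM : r + 1 ≤ M) :
    ∀ a : ℕ →₀ ℕ, kos (μ ∘ Equiv.swap r (r + 1)) M a = kos μ M a := by
  induction M, hM using Nat.le_induction with
  | base =>
    intro a
    obtain ⟨s, rfl⟩ : ∃ s, r = s + 1 := ⟨r - 1, by omega⟩
    exact kos_swap_top μ s a
  | succ M hM ih =>
    intro a
    simp only [kos, ih, Function.comp]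
    rw [Equiv.swap_apply_of_ne_of_ne (by omega) (by omega)]

/-! ### Bounded counts -/

theorem kos_extend {β : ℕ → ℕ} {M : ℕ} (h : β (M + 1) = 0) {a : ℕ →₀ ℕ}
    (ha : ∀ i, a (i + 1) ≤ a i) : kos β (M + 1) a = kos β M a := by
  unfold kos
  rw [h, Finset.sum_eq_single a]
  · cases M <;> rfl
  · intro k hk hne
    rw [Finset.mem_filter] at hk
    exact absurd (eq_of_le_of_sz (inter_le hk.1) (by omega)) hne
  · intro hk
    exfalso; apply hk
    rw [Finset.mem_filter]
    exact ⟨self_mem_inter ha, rfl⟩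

theorem kos_extend' {β : ℕ → ℕ} {m n : ℕ} (hmn : m ≤ n) (h : ∀ i, m < i → β i = 0)
    {a : ℕ →₀ ℕ} (ha : ∀ i, a (i + 1) ≤ a i) : kos β n a = kos β m a := by
  induction n, hmn using Nat.le_induction with
  | base => rfl
  | succ n hn ih => rw [kos_extend (h _ (by omega)) ha, ih]

/-- The number of semistandard fillings with entries at most `m`. -/
noncomputable def ssn : ℕ → (ℕ →₀ ℕ) → ℕ
  | 0, a => if a = 0 then 1 else 0
  | m + 1, a => ∑ k ∈ inter a, ssn m k

theorem sum_kos (m : ℕ) : ∀ a : ℕ →₀ ℕ,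
    ∑ β ∈ Finset.piAntidiag (Finset.Icc 1 m) (sz a), kos β m a = ssn m a := by
  induction m with
  | zero =>
    intro a
    by_cases ha : a = 0
    · subst ha
      simp [kos, ssn, sz_zero]
    · have : sz a ≠ 0 := fun h => ha (eq_zero_of_sz h)
      simp [kos, ssn, ha]
  | succ m ih =>
    intro a
    simp only [kos, ssn]
    simp_rw [Finset.sum_filter]
    rw [Finset.sum_comm]
    apply Finset.sum_congr rfl
    intro k hk
    rw [← ih k, ← Finset.sum_filter]
    have hsz := sz_mono (inter_le hk)
    apply Finset.sum_bij' (fun β _ => fun i => if i = m + 1 then 0 else β i)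
      (fun β _ => fun i => if i = m + 1 then sz a - sz k else β i)
    · intro β hβ
      rw [Finset.mem_filter, Finset.mem_piAntidiag] at hβ
      obtain ⟨⟨h1, h2⟩, h3⟩ := hβ
      rw [Finset.mem_piAntidiag]
      constructor
      · rw [Finset.sum_Icc_succ_top (by omega)] at h1
        rw [Finset.sum_congr rfl (g := β)]
        · have h4 : ∑ i ∈ Finset.Icc 1 m, β i = (Finset.Icc 1 m).sum β := rfl
          omega
        · intro i hi
          rw [Finset.mem_Icc] at hi
          rw [if_neg (by omega)]
      · intro i hi
        split_ifs at hi with h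
        · exact absurd rfl hi
        · have := h2 i hi
          rw [Finset.mem_Icc] at this ⊢
          omega
    · intro β hβ
      rw [Finset.mem_piAntidiag] at hβ
      obtain ⟨h1, h2⟩ := hβ
      rw [Finset.mem_filter, Finset.mem_piAntidiag]
      refine ⟨⟨?_, ?_⟩, ?_⟩
      · rw [Finset.sum_Icc_succ_top (by omega), if_pos rfl, Finset.sum_congr rfl (g := β)]
        · omega
        · intro i hi
          rw [Finset.mem_Icc] at hi
          rw [if_neg (by omega)]
      · intro i hi
        rw [Finset.mem_Icc]
        by_cases h : i = m + 1
        · omega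
        · rw [if_neg h] at hi
          have := h2 i hi
          rw [Finset.mem_Icc] at this
          omega
      · simp only [if_true]; omega
    · intro β hβ
      rw [Finset.mem_filter, Finset.mem_piAntidiag] at hβ
      funext i
      by_cases h : i = m + 1
      · subst h; simp only [if_true]; omega
      · simp [h]
    · intro β hβ
      rw [Finset.mem_piAntidiag] at hβ
      funext i
      by_cases h : i = m + 1
      · subst h
        simp only [if_true]
        by_contra hc
        have := hβ.2 (m + 1) (Ne.symm hc)
        rw [Finset.mem_Icc] at this
        omega
      · simp [h]
    · intro β hβ
      apply kos_congr
      intro i h1 h2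
      rw [if_neg (by omega)]

/-- The indicator of the colors `1..n`. -/
def ones (n : ℕ) (i : ℕ) : ℕ := if 1 ≤ i ∧ i ≤ n then 1 else 0

/-- The one-column shape. -/
noncomputable def col (n : ℕ) : ℕ →₀ ℕ :=
  Finsupp.onFinset (Finset.range n) (fun i => if i < n then 1 else 0) (by
    intro i hi
    rw [Finset.mem_range]
    by_contra hc
    simp [hc] at hi)

theorem col_apply (n i : ℕ) : col n i = if i < n then 1 else 0 := rfl

theorem sz_col (n : ℕ) : sz (col n) = n := by
  rw [sz_eq (col n) n (fun i hi => by rw [col_apply, if_neg (by omega)])]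
  rw [Finset.sum_congr rfl (g := fun _ => 1)]
  · simp
  · intro i hi
    rw [Finset.mem_range] at hi
    rw [col_apply, if_pos hi]

theorem sz_sub_col {a : ℕ →₀ ℕ} {n : ℕ} (h1 : ∀ i, i < n → 1 ≤ a i) :
    sz (a - col n) + n = sz a := by
  obtain ⟨L, hL⟩ := exists_bound a
  have h2 : ∀ i, L ≤ i → (a - col n) i = 0 := fun i hi => by simp [hL i hi]
  have hcL : ∀ i, L ≤ i → col n i = 0 := by
    intro i hi
    rw [col_apply]
    split_ifs with h
    · have := h1 i h
      rw [hL i hi] at this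
      omega
    · rfl
  have h3 : sz (a - col n) + sz (col n) = sz a := by
    rw [sz_eq a L hL, sz_eq _ L h2, sz_eq _ L hcL, ← Finset.sum_add_distrib]
    apply Finset.sum_congr rfl
    intro i _
    rw [Finsupp.tsub_apply, col_apply]
    split_ifs with h
    · have := h1 i h; omega
    · omega
  rw [sz_col] at h3
  exact h3

theorem kos_col (β : ℕ → ℕ) (M : ℕ) : ∀ a : ℕ →₀ ℕ, (∀ i, i < M → 1 ≤ a i) →
    (∀ i, M ≤ i → a i = 0) →
    kos (fun i => ones M i + β i) M a = kos β M (a - col M) := by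
  induction M with
  | zero =>
    intro a _ h0
    have : a = 0 := by ext i; simp [h0 i]
    subst this
    simp [kos]
  | succ M ih =>
    intro a h1 h0
    have hc : ∀ k, kos (fun i => ones (M + 1) i + β i) M k
        = kos (fun i => ones M i + β i) M k := by
      apply kos_congr
      intro i hi1 hi2
      unfold ones
      rw [if_pos (by omega), if_pos (by omega)]
    simp only [kos, hc]
    have e1 : ones (M + 1) (M + 1) = 1 := by unfold ones; rw [if_pos (by omega)]
    have hsa := sz_sub_col h1
    have h0' : ∀ i, M + 1 ≤ i → (a - col (M + 1)) i = 0 := by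
      intro i hi; simp [h0 i hi]
    have hval : ∀ i, i < M + 1 → (a - col (M + 1)) i = a i - 1 := by
      intro i hi
      rw [Finsupp.tsub_apply, col_apply, if_pos hi]
    rw [e1]
    rw [← Finset.sum_filter_of_ne (p := fun k : ℕ →₀ ℕ => k M = 0)]
    swap
    · intro k _ hk
      exact kos_rows M k hk M le_rfl
    rw [← Finset.sum_filter_of_ne (p := fun k : ℕ →₀ ℕ => k M = 0)
      (s := Finset.filter _ (inter (a - col (M + 1))))]
    swap
    · intro k _ hk
      exact kos_rows M k hk M le_rfl
    apply Finset.sum_bij' (fun k _ => k - col M) (fun k _ => k + col M)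
    · intro k hk
      rw [Finset.mem_filter, Finset.mem_filter, mem_inter] at hk
      obtain ⟨⟨hk1, hk2⟩, hk3⟩ := hk
      have hk4 : ∀ i, i < M → 1 ≤ k i := fun i hi => (h1 (i + 1) (by omega)).trans (hk1 i).1
      have := sz_sub_col hk4
      rw [Finset.mem_filter, Finset.mem_filter, mem_inter]
      refine ⟨⟨?_, ?_⟩, ?_⟩
      · intro i
        rw [Finsupp.tsub_apply k, col_apply]
        rcases lt_trichotomy i M with h | h | h
        · rw [if_pos h, hval i (by omega), hval (i + 1) (by omega)]
          have := hk1 i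
          omega
        · subst h
          rw [if_neg (by omega), hk3, h0' _ le_rfl]
          simp
        · rw [if_neg (by omega), h0' i (by omega), h0' (i + 1) (by omega)]
          have := hk1 i
          rw [h0 i (by omega)] at this
          omega
      · omega
      · rw [Finsupp.tsub_apply, hk3]; simp
    · intro k hk
      rw [Finset.mem_filter, Finset.mem_filter, mem_inter] at hk
      obtain ⟨⟨hk1, hk2⟩, hk3⟩ := hk
      have hs : sz (k + col M) = sz k + M := by
        have := sz_sub_col (a := k + col M) (n := M) (by
          intro i hi
          rw [Finsupp.add_apply, col_apply, if_pos hi]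
          omega)
        rw [add_tsub_cancel_right] at this
        omega
      rw [Finset.mem_filter, Finset.mem_filter, mem_inter]
      refine ⟨⟨?_, ?_⟩, ?_⟩
      · intro i
        rw [Finsupp.add_apply, col_apply]
        have h5 := hk1 i
        rcases lt_trichotomy i M with h | h | h
        · rw [if_pos h]
          rw [hval i (by omega), hval (i + 1) (by omega)] at h5
          have := h1 i (by omega)
          omega
        · subst h
          rw [if_neg (by omega), hk3, h0 _ le_rfl]
          simp
        · rw [if_neg (by omega), h0 i (by omega), h0 (i + 1) (by omega)]
          rw [h0' i (by omega)] at h5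
          omega
      · omega
      · rw [Finsupp.add_apply, hk3, col_apply, if_neg (by omega)]
    · intro k hk
      rw [Finset.mem_filter, Finset.mem_filter, mem_inter] at hk
      obtain ⟨⟨hk1, hk2⟩, hk3⟩ := hk
      ext i
      rw [Finsupp.add_apply, Finsupp.tsub_apply, col_apply]
      split_ifs with h
      · have := (h1 (i + 1) (by omega)).trans (hk1 i).1
        omega
      · simp
    · intro k hk
      exact add_tsub_cancel_right k (col M)
    · intro k hk
      rw [Finset.mem_filter, Finset.mem_filter, mem_inter] at hk
      obtain ⟨⟨hk1, hk2⟩, hk3⟩ := hk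
      apply ih
      · exact fun i hi => (h1 (i + 1) (by omega)).trans (hk1 i).1
      · intro i hi
        by_cases h : i = M
        · rw [h, hk3]
        · have := (hk1 i).2
          rw [h0 i (by omega)] at this
          omega

/-! ### Evaluation at `-1` -/

/-- Newton evaluation at `-1`. -/
def vev : ℕ → (ℕ → ℚ) → ℚ
  | 0, F => F 0
  | N + 1, F => F 0 - vev N (fun m => F (m + 1) - F m)

theorem vev_sum {ι : Type*} (s : Finset ι) (N : ℕ) : ∀ (c : ι → ℚ) (F : ι → ℕ → ℚ),
    vev N (fun m => ∑ i ∈ s, c i * F i m) = ∑ i ∈ s, c i * vev N (F i) := by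
  induction N with
  | zero => intro c F; rfl
  | succ N ih =>
    intro c F
    simp only [vev]
    have : (fun m => ∑ i ∈ s, c i * F i (m + 1) - ∑ i ∈ s, c i * F i m)
        = fun m => ∑ i ∈ s, c i * (F i (m + 1) - F i m) := by
      funext m
      rw [← Finset.sum_sub_distrib]
      exact Finset.sum_congr rfl fun i _ => by ring
    rw [this, ih c (fun i m => F i (m + 1) - F i m), ← Finset.sum_sub_distrib]
    exact Finset.sum_congr rfl fun i _ => by ring

theorem vev_congr (N : ℕ) : ∀ F G : ℕ → ℚ, (∀ m, m ≤ N → F m = G m) → vev N F = vev N G := by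
  induction N with
  | zero => intro F G h; exact h 0 le_rfl
  | succ N ih =>
    intro F G h
    simp only [vev]
    rw [h 0 (by omega), ih _ (fun m => G (m + 1) - G m)]
    intro m hm
    rw [h m (by omega), h (m + 1) (by omega)]

theorem vev_eq (N : ℕ) : ∀ F : ℚ → ℚ,
    vev N (fun m => F m) = F (-1) - (-1) ^ (N + 1) * ((fwdDiff (1 : ℚ))^[N + 1] F) (-1) := by
  induction N with
  | zero => intro F; simp [vev, fwdDiff]
  | succ N ih =>
    intro F
    have := ih (fwdDiff (1 : ℚ) F)
    simp only [vev]
    have h2 : (fun m : ℕ => F ((m + 1 : ℕ) : ℚ) - F m) = fun m : ℕ => (fwdDiff (1 : ℚ) F) (m : ℚ) := by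
      funext m; simp [fwdDiff]
    rw [h2, this, Function.iterate_succ_apply (n := N + 1)]
    simp only [fwdDiff]
    norm_num
    ring

theorem vev_poly (N : ℕ) (P : Polynomial ℚ) (h : P.natDegree ≤ N) :
    vev N (fun m => P.eval (m : ℚ)) = P.eval (-1) := by
  rw [vev_eq N (fun x => P.eval x)]
  have := Polynomial.fwdDiff_iter_eq_zero_of_degree_lt (P := P) (n := N + 1) (by omega)
  have h2 := congrFun this (-1)
  simp only [Pi.zero_apply] at h2
  rw [h2]; ring

/-- The polynomial `∑ (-1)^j C(x,j) x^(n-j)`. -/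
noncomputable def qpoly (n : ℕ) : Polynomial ℚ :=
  ∑ j ∈ Finset.range (n + 1), Polynomial.C ((-1) ^ j / (j.factorial : ℚ)) *
    (descPochhammer ℚ j * Polynomial.X ^ (n - j))

theorem qpoly_deg (n : ℕ) : (qpoly n).natDegree ≤ n := by
  apply Polynomial.natDegree_sum_le_of_forall_le
  intro j hj
  rw [Finset.mem_range] at hj
  refine (Polynomial.natDegree_C_mul_le _ _).trans ?_
  refine Polynomial.natDegree_mul_le.trans ?_
  have : (descPochhammer ℚ j).natDegree = j := by
    exact descPochhammer_natDegree ℚ j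
  rw [this, Polynomial.natDegree_X_pow]
  omega

theorem descPoch_neg_one (j : ℕ) :
    (descPochhammer ℚ j).eval (-1) = (-1) ^ j * (j.factorial : ℚ) := by
  induction j with
  | zero => simp
  | succ j ih =>
    rw [descPochhammer_succ_eval, ih, Nat.factorial_succ]
    push_cast
    ring

theorem qpoly_neg_one (n : ℕ) : (qpoly n).eval (-1) = if Even n then 1 else 0 := by
  unfold qpoly
  rw [Polynomial.eval_finsetSum]
  have : ∀ j ∈ Finset.range (n + 1), Polynomial.eval (-1)
      (Polynomial.C ((-1) ^ j / (j.factorial : ℚ)) *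
    (descPochhammer ℚ j * Polynomial.X ^ (n - j))) = (-1) ^ (n - j) := by
    intro j hj
    rw [Polynomial.eval_mul, Polynomial.eval_mul, Polynomial.eval_C, descPoch_neg_one,
      Polynomial.eval_pow, Polynomial.eval_X]
    have h1 : (j.factorial : ℚ) ≠ 0 := by positivity
    field_simp
    rw [← pow_mul, pow_mul']
    simp
  rw [Finset.sum_congr rfl this]
  have h2 := Finset.sum_range_reflect (fun j => (-1 : ℚ) ^ j) (n + 1)
  simp only [Nat.add_sub_cancel] at h2
  rw [h2, neg_one_geom_sum]
  by_cases h : Even n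
  · simp [h, Nat.even_add_one]
  · simp [h, Nat.even_add_one]

theorem qpoly_nat (n m : ℕ) (h : m ≤ n) :
    (qpoly n).eval (m : ℚ) = (m : ℚ) ^ (n - m) * ((m : ℚ) - 1) ^ m := by
  unfold qpoly
  rw [Polynomial.eval_finsetSum]
  have : ∀ j ∈ Finset.range (n + 1), Polynomial.eval (m : ℚ)
      (Polynomial.C ((-1) ^ j / (j.factorial : ℚ)) *
    (descPochhammer ℚ j * Polynomial.X ^ (n - j))) =
      (-1) ^ j * (m : ℚ) ^ (n - j) * (m.choose j : ℚ) := by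
    intro j hj
    rw [Polynomial.eval_mul, Polynomial.eval_mul, Polynomial.eval_C,
      descPochhammer_eval_eq_descFactorial,
      Polynomial.eval_pow, Polynomial.eval_X, Nat.descFactorial_eq_factorial_mul_choose]
    have h1 : (j.factorial : ℚ) ≠ 0 := by positivity
    push_cast
    field_simp
  rw [Finset.sum_congr rfl this]
  rw [show (m : ℚ) - 1 = -1 + m by ring, add_pow, Finset.mul_sum]
  symm
  rw [← Finset.sum_subset (s₁ := Finset.range (m + 1)) (s₂ := Finset.range (n + 1))]
  · apply Finset.sum_congr rfl
    intro j hj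
    rw [Finset.mem_range] at hj
    have : n - j = (n - m) + (m - j) := by omega
    rw [this, pow_add]
    ring
  · intro j hj
    rw [Finset.mem_range] at hj ⊢
    omega
  · intro j _ hj
    rw [Finset.mem_range] at hj
    rw [Nat.choose_eq_zero_of_lt (by omega)]
    simp

theorem col_inj {j k : ℕ} (h : col j = col k) : j = k := by
  have := congrArg sz h
  rwa [sz_col, sz_col] at this

theorem vev_ssn (N : ℕ) : ∀ a : ℕ →₀ ℕ, (∀ i, a (i + 1) ≤ a i) → sz a ≤ N →
    vev N (fun m => (ssn m a : ℚ)) = if a = col (sz a) then (-1) ^ sz a else 0 := by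
  induction N with
  | zero =>
    intro a _ h
    have : a = 0 := eq_zero_of_sz (by omega)
    subst this
    have h0 : (0 : ℕ →₀ ℕ) = col 0 := by ext i; simp [col_apply]
    simp [vev, ssn, sz_zero, ← h0]
  | succ N ih =>
    intro a ha hs
    by_cases ha0 : a = 0
    · subst ha0
      have h0 : (0 : ℕ →₀ ℕ) = col 0 := by ext i; simp [col_apply]
      have hi : inter 0 = {0} := by
        ext k
        rw [mem_inter, Finset.mem_singleton]
        constructor
        · intro h; ext i; have := h i; simpa using this
        · rintro rfl; simp
      have h1 : (fun m => ((ssn (m + 1) 0 : ℕ) : ℚ) - (ssn m 0 : ℕ)) = fun m => 0 := by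
        funext m; simp [ssn, hi]
      have h2 := vev_sum (∅ : Finset ℕ) N (fun _ => 0) (fun _ _ => 0)
      simp only [Finset.sum_empty] at h2
      simp only [vev]
      rw [h1, h2]
      simp [ssn, sz_zero, ← h0]
    · simp only [vev]
      have h1 : (fun m => ((ssn (m + 1) a : ℕ) : ℚ) - (ssn m a : ℕ))
          = fun m => ∑ k ∈ (inter a).erase a, 1 * (ssn m k : ℚ) := by
        funext m
        simp only [ssn]
        rw [← Finset.sum_erase_add _ _ (self_mem_inter ha)]
        push_cast
        simp
      rw [h1, vev_sum ((inter a).erase a) N (fun _ => 1) (fun k m => (ssn m k : ℚ))]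
      have h2 : ∀ k ∈ (inter a).erase a, 1 * vev N (fun m => (ssn m k : ℚ))
          = if k = col (sz k) then (-1) ^ sz k else 0 := by
        intro k hk
        rw [Finset.mem_erase] at hk
        rw [one_mul, ih k (inter_anti hk.2)]
        have hle := sz_mono (inter_le hk.2)
        have : sz k ≠ sz a := fun h => hk.1 (eq_of_le_of_sz (inter_le hk.2) h.ge)
        omega
      rw [Finset.sum_congr rfl h2]
      have hanti : Antitone a := antitone_nat_of_succ_le ha
      -- number of rows
      have hex : ∃ l, a l = 0 := by
        obtain ⟨L, hL⟩ := exists_bound a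
        exact ⟨L, hL L le_rfl⟩
      set l := Nat.find hex with hl
      have hl0 : ∀ i, l ≤ i → a i = 0 := fun i hi =>
        Nat.le_zero.mp ((hanti hi).trans (Nat.find_spec hex).le)
      have hl1 : ∀ i, i < l → 1 ≤ a i := fun i hi =>
        Nat.one_le_iff_ne_zero.mpr (Nat.find_min hex hi)
      have hlpos : 1 ≤ l := by
        by_contra hc
        apply ha0
        ext i
        simp [hl0 i (by omega)]
      have hmem : ∀ r, col r ∈ inter a → r = l - 1 ∨ r = l := by
        intro r hr
        rw [mem_inter] at hr
        have h3 : r ≤ l := by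
          by_contra hc
          have := (hr l).2
          rw [col_apply, if_pos (by omega), hl0 l le_rfl] at this
          omega
        have h4 : l ≤ r + 1 := by
          by_contra hc
          have := (hr r).1
          rw [col_apply, if_neg (by omega)] at this
          have := hl1 (r + 1) (by omega)
          omega
        omega
      have hzero : ((ssn 0 a : ℕ) : ℚ) = 0 := by simp [ssn, ha0]
      rw [hzero, zero_sub]
      by_cases hac : a = col l
      · have hsl : sz a = l := by rw [hac, sz_col]
        rw [hsl, if_pos hac]
        rw [Finset.sum_eq_single (col (l - 1))]
        · rw [sz_col, if_pos rfl]
          obtain ⟨p, hp⟩ : ∃ p, l = p + 1 := ⟨l - 1, by omega⟩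
          rw [hp, Nat.add_sub_cancel, pow_succ]
          ring
        · intro k hk hne
          rw [Finset.mem_erase] at hk
          rw [if_neg]
          intro hkc
          rw [hkc] at hk
          rcases hmem _ hk.2 with h | h
          · rw [hkc, h] at hne; exact hne rfl
          · rw [h] at hk; exact hk.1 hac.symm
        · intro hk
          exfalso; apply hk
          rw [Finset.mem_erase, mem_inter]
          constructor
          · rw [hac]; intro h; have := col_inj h; omega
          · intro i
            rw [hac, col_apply, col_apply, col_apply]
            split_ifs <;> omega
      · have hacs : a ≠ col (sz a) := by
          intro h
          apply hac
          have h5 : col (sz a) ∈ inter a := by rw [← h]; exact self_mem_inter ha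
          rcases hmem _ h5 with h6 | h6
          · exfalso
            have := hl1 (l - 1) (by omega)
            rw [h, col_apply, h6] at this
            simp at this
          · rw [h6] at h; exact h
        rw [if_neg hacs, neg_eq_zero]
        by_cases hb : ∀ i, a (i + 1) ≤ 1
        · have hm1 : col l ∈ (inter a).erase a := by
            rw [Finset.mem_erase, mem_inter]
            refine ⟨fun h => hac h.symm, fun i => ?_⟩
            rw [col_apply]
            split_ifs with h
            · exact ⟨hb i, hl1 i h⟩
            · rw [hl0 (i + 1) (by omega)]; simp
          have hm2 : col (l - 1) ∈ (inter a).erase a := by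
            rw [Finset.mem_erase, mem_inter]
            refine ⟨fun h => ?_, fun i => ?_⟩
            · have := hl1 (l - 1) (by omega)
              rw [← h, col_apply] at this
              simp at this
            · rw [col_apply]
              split_ifs with h
              · exact ⟨hb i, hl1 i (by omega)⟩
              · rw [hl0 (i + 1) (by omega)]; simp
          rw [← Finset.sum_subset (s₁ := {col (l - 1), col l})]
          · rw [Finset.sum_pair]
            · rw [sz_col, sz_col, if_pos rfl, if_pos rfl]
              obtain ⟨p, hp⟩ : ∃ p, l = p + 1 := ⟨l - 1, by omega⟩
              rw [hp, Nat.add_sub_cancel, pow_succ]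
              ring
            · intro h; have := col_inj h; omega
          · intro k hk
            rw [Finset.mem_insert, Finset.mem_singleton] at hk
            rcases hk with rfl | rfl
            · exact hm2
            · exact hm1
          · intro k hk hk'
            rw [if_neg]
            intro hkc
            rw [Finset.mem_erase, hkc] at hk
            apply hk'
            rw [Finset.mem_insert, Finset.mem_singleton]
            rcases hmem _ hk.2 with h | h
            · left; rw [hkc, h]
            · right; rw [hkc, h]
        · apply Finset.sum_eq_zero
          intro k hk
          rw [if_neg]
          intro hkc
          apply hb
          intro i
          rw [Finset.mem_erase, mem_inter] at hk
          refine (hk.2 i).1.trans ?_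
          rw [hkc, col_apply]
          split_ifs <;> omega

/-! ### The rows of a partition -/

theorem getD_zero_of_le (l : List ℕ) (i : ℕ) (h : l.length ≤ i) : l.getD i 0 = 0 := by
  simp [List.getD, h]

theorem sum_getD (l : List ℕ) : ∑ i ∈ Finset.range l.length, l.getD i 0 = l.sum := by
  induction l with
  | nil => simp
  | cons x l ih =>
    rw [List.length_cons, Finset.sum_range_succ']
    simp only [List.getD_cons_succ, List.getD_cons_zero, List.sum_cons]
    rw [ih, add_comm]

theorem getD_anti (l : List ℕ) (h : l.Pairwise (· ≥ ·)) (i : ℕ) :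
    l.getD (i + 1) 0 ≤ l.getD i 0 := by
  by_cases hi : i + 1 < l.length
  · have := List.pairwise_iff_getElem.mp h i (i + 1) (by omega) hi (by omega)
    rw [List.getD_eq_getElem _ _ hi, List.getD_eq_getElem _ _ (by omega : i < l.length)]
    exact this
  · rw [getD_zero_of_le l (i + 1) (by omega)]
    exact Nat.zero_le _

theorem getD_ext (l l' : List ℕ) (h : ∀ x ∈ l, 0 < x) (h' : ∀ x ∈ l', 0 < x)
    (he : ∀ i, l.getD i 0 = l'.getD i 0) : l = l' := by
  have hl : ∀ (l : List ℕ), (∀ x ∈ l, 0 < x) → ∀ i, i < l.length ↔ l.getD i 0 ≠ 0 := by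
    intro l h i
    constructor
    · intro hi
      rw [List.getD_eq_getElem _ _ hi]
      exact (h _ (List.getElem_mem hi)).ne'
    · intro hi
      by_contra hc
      exact hi (getD_zero_of_le l i (by omega))
  have hlen : l.length = l'.length := by
    apply le_antisymm
    · by_contra hc
      have := (hl l h l'.length).mp (by omega)
      rw [he, ← hl l' h'] at this
      omega
    · by_contra hc
      have := (hl l' h' l.length).mp (by omega)
      rw [← he, ← hl l h] at this
      omega
  apply List.ext_getElem hlen
  intro i h1 h2
  have := he i
  rwa [List.getD_eq_getElem _ _ h1, List.getD_eq_getElem _ _ h2] at this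

/-- The weakly decreasing list of parts. -/
def plist {N : ℕ} (lam : Nat.Partition N) : List ℕ := (lam.parts.sort (· ≤ ·)).reverse

theorem coe_plist {N : ℕ} (lam : Nat.Partition N) : (plist lam : Multiset ℕ) = lam.parts := by
  unfold plist
  rw [Multiset.coe_reverse, Multiset.sort_eq]

theorem plist_pairwise {N : ℕ} (lam : Nat.Partition N) : (plist lam).Pairwise (· ≥ ·) := by
  unfold plist
  rw [List.pairwise_reverse]
  exact Multiset.pairwise_sort _ _

theorem plist_pos {N : ℕ} (lam : Nat.Partition N) : ∀ x ∈ plist lam, 0 < x := by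
  intro x hx
  apply lam.parts_pos
  rw [← coe_plist]
  exact hx

theorem plist_sum {N : ℕ} (lam : Nat.Partition N) : (plist lam).sum = N := by
  rw [← Multiset.sum_coe, coe_plist, lam.parts_sum]

/-- The rows of a partition as a finitely supported function. -/
noncomputable def row {N : ℕ} (lam : Nat.Partition N) : ℕ →₀ ℕ :=
  Finsupp.onFinset (Finset.range (plist lam).length) (rowLen lam) (by
    intro i hi
    rw [Finset.mem_range]
    by_contra hc
    exact hi (getD_zero_of_le _ i (by unfold plist at hc; omega)))

theorem row_apply {N : ℕ} (lam : Nat.Partition N) (i : ℕ) : row lam i = rowLen lam i := rfl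

theorem row_apply' {N : ℕ} (lam : Nat.Partition N) (i : ℕ) :
    row lam i = (plist lam).getD i 0 := rfl

theorem row_anti {N : ℕ} (lam : Nat.Partition N) (i : ℕ) : row lam (i + 1) ≤ row lam i :=
  getD_anti _ (plist_pairwise lam) i

theorem sz_row {N : ℕ} (lam : Nat.Partition N) : sz (row lam) = N := by
  rw [sz_eq (row lam) (plist lam).length (fun i hi => getD_zero_of_le _ i hi)]
  simp only [row_apply']
  rw [sum_getD, plist_sum]

theorem row_inj {N : ℕ} {lam nu : Nat.Partition N} (h : row lam = row nu) : lam = nu := by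
  apply Nat.Partition.ext
  rw [← coe_plist, ← coe_plist]
  congr 1
  apply getD_ext _ _ (plist_pos lam) (plist_pos nu)
  intro i
  exact DFunLike.congr_fun h i

theorem row_surj {N : ℕ} (a : ℕ →₀ ℕ) (ha : ∀ i, a (i + 1) ≤ a i) (hs : sz a = N) :
    ∃ lam : Nat.Partition N, row lam = a := by
  have hanti : Antitone a := antitone_nat_of_succ_le ha
  have hex : ∃ l, a l = 0 := by
    obtain ⟨L, hL⟩ := exists_bound a
    exact ⟨L, hL L le_rfl⟩
  set l := Nat.find hex with hl
  have hl0 : ∀ i, l ≤ i → a i = 0 := fun i hi =>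
    Nat.le_zero.mp ((hanti hi).trans (Nat.find_spec hex).le)
  have hl1 : ∀ i, i < l → 0 < a i := fun i hi =>
    Nat.pos_of_ne_zero (Nat.find_min hex hi)
  let L : List ℕ := (List.range l).map a
  have hLsum : L.sum = N := by
    rw [← hs, sz_eq a l hl0]
    simp only [L]
    rw [Finset.sum_range]
    rw [← Fin.sum_ofFn]
    congr 1
    apply List.ext_getElem
    · simp
    · intro i h1 h2; simp
  have hLget : ∀ i, L.getD i 0 = a i := by
    intro i
    by_cases hi : i < l
    · rw [List.getD_eq_getElem _ _ (by simpa [L] using hi)]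
      simp [L]
    · rw [getD_zero_of_le _ _ (by simp [L]; omega), hl0 i (by omega)]
  have hLpw : L.Pairwise (· ≥ ·) := by
    rw [List.pairwise_iff_getElem]
    intro i j h1 h2 hij
    simp only [L, List.getElem_map, List.getElem_range]
    exact hanti hij.le
  refine ⟨⟨(L : Multiset ℕ), ?_, ?_⟩, ?_⟩
  · intro i hi
    simp only [L, Multiset.mem_coe, List.mem_map, List.mem_range] at hi
    obtain ⟨j, hj, rfl⟩ := hi
    exact hl1 j hj
  · rw [Multiset.sum_coe, hLsum]
  · have : plist (⟨(L : Multiset ℕ), by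
        intro i hi
        simp only [L, Multiset.mem_coe, List.mem_map, List.mem_range] at hi
        obtain ⟨j, hj, rfl⟩ := hi
        exact hl1 j hj, by rw [Multiset.sum_coe, hLsum]⟩ : Nat.Partition N) = L := by
      refine List.Perm.eq_of_pairwise (le := (· ≥ ·)) ?_ (plist_pairwise _) hLpw ?_
      · intro x y _ _ h1 h2
        exact le_antisymm h2 h1
      · rw [← Multiset.coe_eq_coe, coe_plist]
    ext i
    rw [row_apply', this, hLget]

/-! ### From tableaux to the recursive count -/

theorem card_filter_lower (n : ℕ) (p : ℕ → Prop) [DecidablePred p]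
    (hp : ∀ j, j + 1 < n → p (j + 1) → p j) (j : ℕ) :
    j < ((Finset.range n).filter p).card ↔ j < n ∧ p j := by
  induction n with
  | zero => simp
  | succ n ih =>
    by_cases h : p n
    · have hall : ∀ d i, i + d = n → p i := by
        intro d
        induction d with
        | zero => intro i hi; simp at hi; rwa [hi]
        | succ d ihd => intro i hi; exact hp i (by omega) (ihd (i + 1) (by omega))
      have : (Finset.range (n + 1)).filter p = Finset.range (n + 1) := by
        rw [Finset.filter_eq_self]
        intro i hi
        rw [Finset.mem_range] at hi
        exact hall (n - i) i (by omega)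
      rw [this, Finset.card_range]
      constructor
      · intro hj; exact ⟨hj, hall (n - j) j (by omega)⟩
      · exact fun hj => hj.1
    · rw [Finset.range_add_one, Finset.filter_insert, if_neg h,
        ih (fun i hi => hp i (by omega))]
      constructor
      · rintro ⟨h1, h2⟩; exact ⟨by omega, h2⟩
      · rintro ⟨h1, h2⟩
        refine ⟨?_, h2⟩
        rcases Nat.lt_succ_iff_lt_or_eq.mp h1 with h3 | h3
        · exact h3
        · subst h3; exact absurd h2 h

/-- The cells of a shape. -/
noncomputable def cells (a : ℕ →₀ ℕ) : Finset Cell :=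
  a.support.biUnion fun i => (Finset.range (a i)).image (Prod.mk i)

theorem mem_cells {a : ℕ →₀ ℕ} {c : Cell} : c ∈ cells a ↔ c.2 < a c.1 := by
  unfold cells
  simp only [Finset.mem_biUnion, Finset.mem_image, Finset.mem_range, Finsupp.mem_support_iff]
  constructor
  · rintro ⟨i, _, j, hj, rfl⟩; exact hj
  · intro h; exact ⟨c.1, by omega, c.2, h, rfl⟩

theorem card_cells (a : ℕ →₀ ℕ) : (cells a).card = sz a := by
  unfold cells sz
  rw [Finset.card_biUnion]
  · apply Finset.sum_congr rfl
    intro i _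
    rw [Finset.card_image_of_injective _ (Prod.mk_right_injective i), Finset.card_range]
  · intro i _ j _ hij
    rw [Function.onFun, Finset.disjoint_left]
    intro c hc hc'
    simp only [Finset.mem_image] at hc hc'
    obtain ⟨x, _, rfl⟩ := hc
    obtain ⟨y, _, h⟩ := hc'
    exact hij (congrArg Prod.fst h).symm

/-- Semistandard tableaux of shape `a` with entries in `1..M`. -/
def IsT (a : ℕ →₀ ℕ) (M : ℕ) (μ : ℕ → ℕ) (t : Cell → ℕ) : Prop :=
  (∀ c, c ∉ cells a → t c = 0) ∧ (∀ c ∈ cells a, 0 < t c ∧ t c ≤ M) ∧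
  (∀ i j : ℕ, ((i, j + 1) : Cell) ∈ cells a → t (i, j) ≤ t (i, j + 1)) ∧
  (∀ i j : ℕ, ((i + 1, j) : Cell) ∈ cells a → t (i, j) < t (i + 1, j)) ∧
  ∀ i, 1 ≤ i → i ≤ M → ((cells a).filter (fun c => t c = i)).card = μ i

/-- The subshape of the entries at most `M`. -/
noncomputable def subsh (a : ℕ →₀ ℕ) (M : ℕ) (t : Cell → ℕ) : ℕ →₀ ℕ :=
  Finsupp.onFinset a.support (fun i => ((Finset.range (a i)).filter (fun j => t (i, j) ≤ M)).card)
    (by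
      intro i hi
      rw [Finsupp.mem_support_iff]
      intro h
      simp [h] at hi)

theorem mem_subsh {a : ℕ →₀ ℕ} {M : ℕ} {t : Cell → ℕ}
    (h : ∀ i j : ℕ, ((i, j + 1) : Cell) ∈ cells a → t (i, j) ≤ t (i, j + 1)) (c : Cell) :
    c ∈ cells (subsh a M t) ↔ c ∈ cells a ∧ t c ≤ M := by
  rw [mem_cells, mem_cells]
  obtain ⟨i, j⟩ := c
  exact card_filter_lower (a i) (fun j => t (i, j) ≤ M)
    (fun j hj hp => (h i j (mem_cells.mpr hj)).trans hp) j

theorem isT_fwd {a : ℕ →₀ ℕ} (ha : ∀ i, a (i + 1) ≤ a i) {M : ℕ} {μ : ℕ → ℕ} {t : Cell → ℕ}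
    (h : IsT a (M + 1) μ t) :
    subsh a M t ∈ (inter a).filter (fun k => sz k + μ (M + 1) = sz a) ∧
    IsT (subsh a M t) M μ (fun c => if c ∈ cells (subsh a M t) then t c else 0) := by
  obtain ⟨h0, h1, h2, h3, h4⟩ := h
  have hm := mem_subsh (M := M) h2
  constructor
  · rw [Finset.mem_filter, mem_inter]
    refine ⟨fun i => ⟨?_, ?_⟩, ?_⟩
    · apply le_of_forall_lt
      intro j hj
      have e1 : ((i + 1, j) : Cell) ∈ cells a := mem_cells.mpr hj
      have e2 := h3 i j e1
      have e3 := (h1 _ e1).2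
      have e4 := (hm (i, j)).mpr ⟨mem_cells.mpr (hj.trans_le (ha i)), by omega⟩
      exact mem_cells.mp e4
    · apply le_of_forall_lt
      intro j hj
      exact mem_cells.mp ((hm (i, j)).mp (mem_cells.mpr hj)).1
    · rw [← h4 (M + 1) (by omega) le_rfl, ← card_cells, ← card_cells, ← Finset.card_union_of_disjoint]
      · congr 1
        ext c
        rw [Finset.mem_union, hm, Finset.mem_filter]
        constructor
        · rintro (h | h)
          · exact h.1
          · exact h.1
        · intro h
          have := (h1 c h).2
          by_cases h' : t c ≤ M
          · left; exact ⟨h, h'⟩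
          · right; exact ⟨h, by omega⟩
      · rw [Finset.disjoint_left]
        intro c hc hc'
        rw [hm] at hc
        rw [Finset.mem_filter] at hc'
        omega
  · refine ⟨?_, ?_, ?_, ?_, ?_⟩
    · intro c hc
      simp only [if_neg hc]
    · intro c hc
      simp only [if_pos hc]
      rw [hm] at hc
      exact ⟨(h1 c hc.1).1, hc.2⟩
    · intro i j hc
      have hc' := (hm _).mp hc
      have e := h2 i j hc'.1
      have hd : ((i, j) : Cell) ∈ cells (subsh a M t) := by
        rw [hm]
        refine ⟨?_, by omega⟩
        have := mem_cells.mp hc'.1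
        exact mem_cells.mpr (by dsimp only at this ⊢; omega)
      simp only [if_pos hc, if_pos hd]
      exact e
    · intro i j hc
      have hc' := (hm _).mp hc
      have e := h3 i j hc'.1
      have hd : ((i, j) : Cell) ∈ cells (subsh a M t) := by
        rw [hm]
        refine ⟨?_, by omega⟩
        have := mem_cells.mp hc'.1
        have := ha i
        exact mem_cells.mpr (by dsimp only at *; omega)
      simp only [if_pos hc, if_pos hd]
      exact e
    · intro i hi1 hi2
      rw [← h4 i hi1 (by omega)]
      congr 1
      ext c
      rw [Finset.mem_filter, Finset.mem_filter]
      constructor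
      · rintro ⟨hc, hc'⟩
        simp only [if_pos hc] at hc'
        exact ⟨((hm c).mp hc).1, hc'⟩
      · rintro ⟨hc, hc'⟩
        have : c ∈ cells (subsh a M t) := (hm c).mpr ⟨hc, by omega⟩
        refine ⟨this, ?_⟩
        simp only [if_pos this]
        exact hc'

/-- Fill up with entries `M + 1`. -/
noncomputable def fillT (a k : ℕ →₀ ℕ) (M : ℕ) (t : Cell → ℕ) (c : Cell) : ℕ :=
  if c ∈ cells k then t c else if c ∈ cells a then M + 1 else 0

theorem isT_bwd {a k : ℕ →₀ ℕ} {M : ℕ} {μ : ℕ → ℕ} {t : Cell → ℕ}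
    (hk : k ∈ (inter a).filter (fun k => sz k + μ (M + 1) = sz a)) (h : IsT k M μ t) :
    IsT a (M + 1) μ (fillT a k M t) ∧ subsh a M (fillT a k M t) = k := by
  obtain ⟨h0, h1, h2, h3, h4⟩ := h
  rw [Finset.mem_filter] at hk
  obtain ⟨hk, hsz⟩ := hk
  have hsub : ∀ c, c ∈ cells k → c ∈ cells a := by
    intro c hc
    rw [mem_cells] at hc ⊢
    exact hc.trans_le (inter_le hk _)
  have hle : ∀ c ∈ cells a, (fillT a k M t c ≤ M ↔ c ∈ cells k) := by
    intro c hc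
    unfold fillT
    by_cases hck : c ∈ cells k
    · simp only [hck, if_true, iff_true]; exact (h1 c hck).2
    · simp [hck, hc]
  have hr : ∀ i j : ℕ, ((i, j + 1) : Cell) ∈ cells a →
      fillT a k M t (i, j) ≤ fillT a k M t (i, j + 1) := by
    intro i j hc
    have hd : ((i, j) : Cell) ∈ cells a := by
      rw [mem_cells] at hc ⊢; dsimp only at *; omega
    unfold fillT
    by_cases hck : ((i, j + 1) : Cell) ∈ cells k
    · have hdk : ((i, j) : Cell) ∈ cells k := by
        rw [mem_cells] at hck ⊢; dsimp only at *; omega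
      rw [if_pos hck, if_pos hdk]
      exact h2 i j hck
    · rw [if_neg hck, if_pos hc]
      split_ifs with hdk
      · have := (h1 _ hdk).2; omega
      · exact le_rfl
  refine ⟨⟨?_, ?_, hr, ?_, ?_⟩, ?_⟩
  · intro c hc
    unfold fillT
    rw [if_neg (fun h => hc (hsub c h)), if_neg hc]
  · intro c hc
    unfold fillT
    split_ifs with hck
    · have := h1 c hck; omega
    · omega
  · intro i j hc
    have hd : ((i, j) : Cell) ∈ cells k := by
      rw [mem_cells] at hc ⊢
      exact hc.trans_le (mem_inter.mp hk i).1
    unfold fillT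
    rw [if_pos hd]
    split_ifs with hck
    · exact h3 i j hck
    · have := (h1 _ hd).2; omega
  · intro i hi1 hi2
    by_cases hi : i ≤ M
    · rw [← h4 i hi1 hi]
      congr 1
      ext c
      rw [Finset.mem_filter, Finset.mem_filter]
      constructor
      · rintro ⟨hc, hc'⟩
        have : c ∈ cells k := (hle c hc).mp (by omega)
        unfold fillT at hc'
        rw [if_pos this] at hc'
        exact ⟨this, hc'⟩
      · rintro ⟨hc, hc'⟩
        refine ⟨hsub c hc, ?_⟩
        unfold fillT
        rw [if_pos hc, hc']
    · have hi' : i = M + 1 := by omega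
      subst hi'
      have e : (cells a).filter (fun c => fillT a k M t c = M + 1) = cells a \ cells k := by
        ext c
        rw [Finset.mem_filter, Finset.mem_sdiff]
        constructor
        · rintro ⟨hc, hc'⟩
          refine ⟨hc, fun h => ?_⟩
          have := (hle c hc).mpr h
          omega
        · rintro ⟨hc, hc'⟩
          refine ⟨hc, ?_⟩
          unfold fillT
          rw [if_neg hc', if_pos hc]
      rw [e, Finset.card_sdiff_of_subset hsub, card_cells, card_cells]
      omega
  · ext i
    apply le_antisymm
    · apply le_of_forall_lt
      intro j hj
      have := (mem_subsh hr (i, j)).mp (mem_cells.mpr hj)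
      exact mem_cells.mp ((hle _ this.1).mp this.2)
    · apply le_of_forall_lt
      intro j hj
      have hc : ((i, j) : Cell) ∈ cells k := mem_cells.mpr hj
      exact mem_cells.mp ((mem_subsh hr (i, j)).mpr ⟨hsub _ hc, (hle _ (hsub _ hc)).mpr hc⟩)

/-- Removing the largest entry. -/
noncomputable def isTEquiv (a : ℕ →₀ ℕ) (ha : ∀ i, a (i + 1) ≤ a i) (M : ℕ) (μ : ℕ → ℕ) :
    {t : Cell → ℕ // IsT a (M + 1) μ t} ≃
    Σ k : {k // k ∈ (inter a).filter (fun k => sz k + μ (M + 1) = sz a)},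
      {t : Cell → ℕ // IsT k.1 M μ t} where
  toFun t := ⟨⟨subsh a M t.1, (isT_fwd ha t.2).1⟩, ⟨_, (isT_fwd ha t.2).2⟩⟩
  invFun p := ⟨fillT a p.1.1 M p.2.1, (isT_bwd p.1.2 p.2.2).1⟩
  left_inv := by
    rintro ⟨t, ht⟩
    apply Subtype.ext
    funext c
    have hm := mem_subsh (M := M) ht.2.2.1 c
    simp only [fillT]
    by_cases h1 : c ∈ cells (subsh a M t)
    · rw [if_pos h1, if_pos h1]
    · rw [if_neg h1]
      split_ifs with h2
      · have := (ht.2.1 c h2).2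
        have h3 : ¬ t c ≤ M := fun h => h1 (hm.mpr ⟨h2, h⟩)
        omega
      · exact (ht.1 c h2).symm
  right_inv := by
    rintro ⟨⟨k, hk⟩, ⟨t, ht⟩⟩
    have hs := (isT_bwd hk ht).2
    apply Sigma.subtype_ext
    · exact Subtype.ext hs
    · funext c
      simp only [hs]
      split_ifs with h
      · unfold fillT
        rw [if_pos h]
      · exact (ht.1 c h).symm

theorem card_isT (μ : ℕ → ℕ) (M : ℕ) : ∀ a : ℕ →₀ ℕ, (∀ i, a (i + 1) ≤ a i) →
    Finite {t : Cell → ℕ // IsT a M μ t} ∧ Nat.card {t : Cell → ℕ // IsT a M μ t} = kos μ M a := by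
  induction M with
  | zero =>
    intro a ha
    by_cases h : a = 0
    · subst h
      have hc : cells 0 = ∅ := by ext c; simp [mem_cells]
      have : Unique {t : Cell → ℕ // IsT 0 0 μ t} :=
        { default := ⟨fun _ => 0, by
            refine ⟨fun _ _ => rfl, ?_, ?_, ?_, ?_⟩
            · simp [hc]
            · simp
            · simp [hc]
            · intro i h1 h2; omega⟩
          uniq := by
            rintro ⟨t, ht⟩
            apply Subtype.ext
            funext c
            exact ht.1 c (by simp [hc]) }
      refine ⟨inferInstance, ?_⟩
      rw [Nat.card_unique]
      simp [kos]
    · have : IsEmpty {t : Cell → ℕ // IsT a 0 μ t} := by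
        constructor
        rintro ⟨t, ht⟩
        apply h
        apply eq_zero_of_sz
        rw [← card_cells, Finset.card_eq_zero, Finset.eq_empty_iff_forall_notMem]
        intro c hc
        have := ht.2.1 c hc
        omega
      refine ⟨inferInstance, ?_⟩
      rw [Nat.card_of_isEmpty]
      simp [kos, h]
  | succ M ih =>
    intro a ha
    have hfin : ∀ k : {k // k ∈ (inter a).filter (fun k => sz k + μ (M + 1) = sz a)},
        Finite {t : Cell → ℕ // IsT k.1 M μ t} := by
      intro k
      exact (ih k.1 (inter_anti (Finset.mem_filter.mp k.2).1)).1
    refine ⟨Finite.of_equiv _ (isTEquiv a ha M μ).symm, ?_⟩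
    rw [Nat.card_congr (isTEquiv a ha M μ), Nat.card_sigma]
    have : ∀ k : {k // k ∈ (inter a).filter (fun k => sz k + μ (M + 1) = sz a)},
        Nat.card {t : Cell → ℕ // IsT k.1 M μ t} = kos μ M k.1 := by
      intro k
      exact (ih k.1 (inter_anti (Finset.mem_filter.mp k.2).1)).2
    simp only [this]
    rw [kos]
    exact Finset.sum_coe_sort _ (fun k => kos μ M k)

theorem mem_diag_iff {N : ℕ} (lam : Nat.Partition N) (c : Cell) :
    c ∈ diag lam ↔ c ∈ cells (row lam) := by
  rw [mem_cells]; rfl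

theorem card_diag {N : ℕ} (lam : Nat.Partition N) (t : Cell → ℕ) (i : ℕ) :
    Nat.card {c : Cell // c ∈ diag lam ∧ t c = i}
      = ((cells (row lam)).filter (fun c => t c = i)).card := by
  apply Nat.subtype_card
  intro c
  rw [Finset.mem_filter, mem_diag_iff]

theorem schur_eq_kos {N : ℕ} (lam : Nat.Partition N) (μ : ℕ → ℕ) (M : ℕ) (h0 : μ 0 = 0)
    (hM : ∀ i, M < i → μ i = 0) : schurFn lam μ = kos μ M (row lam) := by
  unfold schurFn
  rw [← (card_isT μ M (row lam) (row_anti lam)).2]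
  congr 1
  apply Nat.card_congr
  apply Equiv.subtypeEquivRight
  intro t
  simp only [card_diag]
  unfold IsSSYT IsT
  simp only [mem_diag_iff]
  constructor
  · rintro ⟨⟨h1, h2, h3, h4⟩, h5⟩
    refine ⟨h1, fun c hc => ⟨h2 c hc, ?_⟩, h3, h4, fun i _ _ => h5 i⟩
    by_contra hc'
    have := h5 (t c)
    rw [hM _ (by omega), Finset.card_eq_zero, Finset.eq_empty_iff_forall_notMem] at this
    exact this c (Finset.mem_filter.mpr ⟨hc, rfl⟩)
  · rintro ⟨h1, h2, h3, h4, h5⟩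
    refine ⟨⟨h1, fun c hc => (h2 c hc).1, h3, h4⟩, fun i => ?_⟩
    by_cases hi : 1 ≤ i ∧ i ≤ M
    · exact h5 i hi.1 hi.2
    · have : μ i = 0 := by
        rcases Nat.eq_zero_or_pos i with h | h
        · rw [h, h0]
        · exact hM i (by omega)
      rw [this, Finset.card_eq_zero, Finset.eq_empty_iff_forall_notMem]
      intro c hc
      rw [Finset.mem_filter] at hc
      have := h2 c hc.1
      omega

/-- Valid weights of degree `N`. -/
def Valid (N : ℕ) (μ : ℕ → ℕ) : Prop :=
  μ 0 = 0 ∧ ∃ M, (∀ i, M < i → μ i = 0) ∧ ∑ i ∈ Finset.range (M + 1), μ i = N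

theorem valid_of_fibers {α : Type*} (s : Finset α) (t : α → ℕ) (μ : ℕ → ℕ)
    (hpos : ∀ c ∈ s, 0 < t c) (h : ∀ i, (s.filter (fun c => t c = i)).card = μ i) :
    Valid s.card μ := by
  refine ⟨?_, s.sup t, ?_, ?_⟩
  · rw [← h 0, Finset.card_eq_zero, Finset.eq_empty_iff_forall_notMem]
    intro c hc
    rw [Finset.mem_filter] at hc
    have := hpos c hc.1
    omega
  · intro i hi
    rw [← h i, Finset.card_eq_zero, Finset.eq_empty_iff_forall_notMem]
    intro c hc
    rw [Finset.mem_filter] at hc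
    have := Finset.le_sup (f := t) hc.1
    omega
  · rw [Finset.card_eq_sum_card_fiberwise (f := t) (t := Finset.range (s.sup t + 1))]
    · exact Finset.sum_congr rfl fun i _ => (h i).symm
    · intro c hc
      have := Finset.le_sup (f := t) hc
      simp only [Finset.coe_range, Set.mem_Iio]
      omega

theorem schur_valid {N : ℕ} (lam : Nat.Partition N) (μ : ℕ → ℕ) (h : ¬ Valid N μ) :
    schurFn lam μ = 0 := by
  unfold schurFn
  rw [Nat.cast_eq_zero]
  have : IsEmpty {t : Cell → ℕ // IsSSYT lam t ∧
    ∀ i, Nat.card {c : Cell // c ∈ diag lam ∧ t c = i} = μ i} := by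
    constructor
    rintro ⟨t, ht, hw⟩
    apply h
    have := valid_of_fibers (cells (row lam)) t μ
      (fun c hc => ht.2.1 c ((mem_diag_iff lam c).mpr hc))
      (fun i => by rw [← card_diag]; exact hw i)
    rwa [card_cells, sz_row] at this
  exact Nat.card_of_isEmpty

/-! ### Triangularity and existence of Schur expansions -/

theorem row_zero {N : ℕ} (lam : Nat.Partition N) (i : ℕ) (h : N ≤ i) : row lam i = 0 := by
  by_contra hc
  have hanti : Antitone (row lam) := antitone_nat_of_succ_le (row_anti lam)
  obtain ⟨L, hL⟩ := exists_bound (row lam)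
  have hs := sz_row lam
  have hiL : i < L := by
    by_contra h'
    exact hc (hL i (by omega))
  rw [sz_eq _ L hL] at hs
  have h1 : ∑ j ∈ Finset.range (i + 1), 1 ≤ ∑ j ∈ Finset.range (i + 1), row lam j := by
    apply Finset.sum_le_sum
    intro j hj
    rw [Finset.mem_range] at hj
    have := hanti (show j ≤ i by omega)
    omega
  have h2 : ∑ j ∈ Finset.range (i + 1), row lam j ≤ ∑ j ∈ Finset.range L, row lam j :=
    Finset.sum_le_sum_of_subset (Finset.range_mono (by omega))
  simp at h1
  omega

theorem row_sum {N : ℕ} (lam : Nat.Partition N) : ∑ i ∈ Finset.range N, row lam i = N := by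
  rw [← sz_eq (row lam) N (row_zero lam), sz_row]

/-- The weight associated with a partition. -/
noncomputable def hat {N : ℕ} (lam : Nat.Partition N) (k : ℕ) : ℕ :=
  if k = 0 then 0 else row lam (k - 1)

theorem hat_succ {N : ℕ} (lam : Nat.Partition N) (k : ℕ) : hat lam (k + 1) = row lam k := by
  simp [hat]

theorem schur_hat {N : ℕ} (lam nu : Nat.Partition N) :
    schurFn nu (hat lam) = kos (hat lam) N (row nu) := by
  apply schur_eq_kos
  · simp [hat]
  · intro i hi
    obtain ⟨k, rfl⟩ : ∃ k, i = k + 1 := ⟨i - 1, by omega⟩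
    rw [hat_succ, row_zero _ _ (by omega)]

/-- The dominance potential. -/
noncomputable def dpot {N : ℕ} (lam : Nat.Partition N) : ℕ :=
  ∑ k ∈ Finset.range (N + 1), ∑ i ∈ Finset.range k, row lam i

theorem dpot_le {N : ℕ} (lam : Nat.Partition N) : dpot lam ≤ (N + 1) * N := by
  unfold dpot
  calc _ ≤ ∑ k ∈ Finset.range (N + 1), N := by
        apply Finset.sum_le_sum
        intro k hk
        rw [Finset.mem_range] at hk
        calc _ ≤ ∑ i ∈ Finset.range N, row lam i :=
              Finset.sum_le_sum_of_subset (Finset.range_mono (by omega))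
          _ = N := row_sum lam
    _ = _ := by simp

theorem tri {N : ℕ} (r : ℕ) (c : Nat.Partition N → ℚ)
    (h : ∀ lam : Nat.Partition N, (∀ i, r ≤ i → row lam i = 0) →
      ∑ nu, c nu * schurFn nu (hat lam) = 0) :
    ∀ nu : Nat.Partition N, (∀ i, r ≤ i → row nu i = 0) → c nu = 0 := by
  have key : ∀ (d : ℕ) (nu : Nat.Partition N), (N + 1) * N - dpot nu = d →
      (∀ i, r ≤ i → row nu i = 0) → c nu = 0 := by
    intro d
    induction d using Nat.strong_induction_on with
    | _ d ih =>
      intro nu hd hr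
      have h1 := h nu hr
      rw [Finset.sum_eq_single nu] at h1
      · rw [schur_hat, kos_diag N (row nu) (row_anti nu) (fun j _ => hat_succ nu j)
          (row_zero nu)] at h1
        simpa using h1
      · intro nu' _ hne
        by_cases hk : kos (hat nu) N (row nu') = 0
        · rw [schur_hat, hk]; simp
        · have hdom := kos_dom N (row nu') hk
          simp only [hat_succ] at hdom
          have hle : dpot nu ≤ dpot nu' := by
            apply Finset.sum_le_sum
            intro k hk
            rw [Finset.mem_range] at hk
            exact hdom k (by omega)
          have hlt : dpot nu < dpot nu' := by
            apply lt_of_le_of_ne hle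
            intro he
            have h2 := (Finset.sum_eq_sum_iff_of_le (fun k hk => hdom k
              (by rw [Finset.mem_range] at hk; omega))).mp he
            apply hne
            apply row_inj
            ext i
            by_cases hi : i < N
            · have e1 := h2 i (Finset.mem_range.mpr (by omega))
              have e2 := h2 (i + 1) (Finset.mem_range.mpr (by omega))
              rw [Finset.sum_range_succ, Finset.sum_range_succ] at e2
              omega
            · rw [row_zero _ _ (by omega), row_zero _ _ (by omega)]
          have hr' : ∀ i, r ≤ i → row nu' i = 0 := by
            intro i hi
            by_cases hiN : N ≤ i
            · exact row_zero _ _ hiN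
            have e1 := hdom r (by omega)
            rw [← sz_eq (row nu) r hr, sz_row] at e1
            have e2 := row_sum nu'
            have e3 : ∑ j ∈ Finset.range (i + 1), row nu' j ≤ ∑ j ∈ Finset.range N, row nu' j :=
              Finset.sum_le_sum_of_subset (Finset.range_mono (by omega))
            have e4 : ∑ j ∈ Finset.range r, row nu' j ≤ ∑ j ∈ Finset.range i, row nu' j :=
              Finset.sum_le_sum_of_subset (Finset.range_mono (by omega))
            rw [Finset.sum_range_succ] at e3
            omega
          have := dpot_le nu'
          rw [ih ((N + 1) * N - dpot nu') (by omega) nu' rfl hr', zero_mul]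
      · simp
  exact fun nu hr => key _ nu rfl hr

theorem sum_swap (M k : ℕ) (hk1 : 1 ≤ k) (hkM : k + 1 ≤ M) (F : ℕ → ℕ → ℕ) (μ : ℕ → ℕ) :
    ∑ i ∈ Finset.range (M + 1), F i ((μ ∘ Equiv.swap k (k + 1)) i) =
    ∑ i ∈ Finset.range (M + 1), F (Equiv.swap k (k + 1) i) (μ i) := by
  apply Finset.sum_equiv (Equiv.swap k (k + 1))
  · intro i
    rw [Finset.mem_range, Finset.mem_range, Equiv.swap_apply_def]
    split_ifs <;> omega
  · intro i _
    simp

theorem Valid.extend {N : ℕ} {μ : ℕ → ℕ} (h : Valid N μ) (K : ℕ) :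
    ∃ M, K ≤ M ∧ (∀ i, M < i → μ i = 0) ∧ ∑ i ∈ Finset.range (M + 1), μ i = N := by
  obtain ⟨_, M, h1, h2⟩ := h
  refine ⟨max M K, le_max_right _ _, fun i hi => h1 i (lt_of_le_of_lt (le_max_left _ _) hi), ?_⟩
  rw [← h2]
  symm
  apply Finset.sum_subset (Finset.range_mono (by omega))
  intro i _ hi
  rw [Finset.mem_range] at hi
  exact h1 i (by omega)

theorem swap_zero' (k : ℕ) (hk : 1 ≤ k) : Equiv.swap k (k + 1) 0 = 0 :=
  Equiv.swap_apply_of_ne_of_ne (by omega) (by omega)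

theorem swap_supp {M k : ℕ} {μ : ℕ → ℕ} (hkM : k + 1 ≤ M) (h : ∀ i, M < i → μ i = 0) :
    ∀ i, M < i → (μ ∘ Equiv.swap k (k + 1)) i = 0 := by
  intro i hi
  rw [Function.comp_apply, Equiv.swap_apply_of_ne_of_ne (by omega) (by omega), h i hi]

theorem Valid.swap {N : ℕ} {μ : ℕ → ℕ} (h : Valid N μ) (k : ℕ) (hk : 1 ≤ k) :
    Valid N (μ ∘ Equiv.swap k (k + 1)) := by
  obtain ⟨M, hM, h1, h2⟩ := h.extend (k + 1)
  refine ⟨?_, M, swap_supp hM h1, ?_⟩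
  · rw [Function.comp_apply, swap_zero' k hk, h.1]
  · rw [← h2]
    exact sum_swap M k hk hM (fun _ x => x) μ

theorem swap_swap' (μ : ℕ → ℕ) (k : ℕ) :
    (μ ∘ Equiv.swap k (k + 1)) ∘ Equiv.swap k (k + 1) = μ := by
  funext i
  simp

theorem schur_swap {N : ℕ} (nu : Nat.Partition N) (μ : ℕ → ℕ) (k : ℕ) (hk : 1 ≤ k) :
    schurFn nu (μ ∘ Equiv.swap k (k + 1)) = schurFn nu μ := by
  by_cases h : Valid N μ
  · obtain ⟨M, hM, h1, h2⟩ := h.extend (k + 1)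
    rw [schur_eq_kos nu μ M h.1 h1, schur_eq_kos nu _ M (h.swap k hk).1 (swap_supp hM h1),
      kos_swap μ k hk M hM]
  · rw [schur_valid nu μ h, schur_valid]
    intro h'
    apply h
    rw [← swap_swap' μ k]
    exact h'.swap k hk

theorem zero_of_hat {N : ℕ} (f : (ℕ → ℕ) → ℚ) (ha : ∀ μ, ¬ Valid N μ → f μ = 0)
    (hb : ∀ μ k, 1 ≤ k → f (μ ∘ Equiv.swap k (k + 1)) = f μ)
    (hc : ∀ nu : Nat.Partition N, f (hat nu) = 0) : ∀ μ, f μ = 0 := by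
  have key : ∀ (M e : ℕ) (μ : ℕ → ℕ), μ 0 = 0 → (∀ i, M < i → μ i = 0) →
      ∑ i ∈ Finset.range (M + 1), μ i = N →
      ∑ i ∈ Finset.range (M + 1), i * μ i = e → f μ = 0 := by
    intro M e
    induction e using Nat.strong_induction_on with
    | _ e ih =>
      intro μ h0 h1 h2 h3
      by_cases hk : ∃ k, 1 ≤ k ∧ μ k < μ (k + 1)
      · obtain ⟨k, hk1, hk2⟩ := hk
        have hkM : k + 1 ≤ M := by
          by_contra h'
          have := h1 (k + 1) (by omega)
          omega
        rw [← hb μ k hk1]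
        refine ih _ ?_ (μ ∘ Equiv.swap k (k + 1)) ?_ (swap_supp hkM h1) ?_ rfl
        · rw [← h3]
          have m1 : k ∈ Finset.range (M + 1) := Finset.mem_range.mpr (by omega)
          have m2 : k + 1 ∈ (Finset.range (M + 1)).erase k :=
            Finset.mem_erase.mpr ⟨by omega, Finset.mem_range.mpr (by omega)⟩
          rw [← Finset.add_sum_erase _ _ m1, ← Finset.add_sum_erase _ _ m2,
            ← Finset.add_sum_erase _ (fun i => i * μ i) m1, ← Finset.add_sum_erase _ _ m2]
          have : ∑ x ∈ ((Finset.range (M + 1)).erase k).erase (k + 1),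
              x * (μ ∘ Equiv.swap k (k + 1)) x =
              ∑ x ∈ ((Finset.range (M + 1)).erase k).erase (k + 1), x * μ x := by
            apply Finset.sum_congr rfl
            intro x hx
            rw [Finset.mem_erase, Finset.mem_erase] at hx
            rw [Function.comp_apply, Equiv.swap_apply_of_ne_of_ne hx.2.1 hx.1]
          rw [this]
          simp only [Function.comp_apply, Equiv.swap_apply_left, Equiv.swap_apply_right]
          nlinarith
        · rw [Function.comp_apply, swap_zero' k hk1, h0]
        · rw [← h2]
          exact sum_swap M k hk1 hkM (fun _ x => x) μ
      · push Not at hk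
        let a : ℕ →₀ ℕ := Finsupp.onFinset (Finset.range M) (fun i => μ (i + 1)) (by
          intro i hi
          rw [Finset.mem_range]
          by_contra h'
          exact hi (h1 _ (by omega)))
        have haa : ∀ i, a i = μ (i + 1) := fun i => rfl
        obtain ⟨lam, hl⟩ := row_surj (N := N) a (fun i => by
          rw [haa, haa]; exact hk (i + 1) (by omega)) (by
          rw [sz_eq a M (fun i hi => by rw [haa]; exact h1 _ (by omega)), ← h2,
            Finset.sum_range_succ', h0]
          rfl)
        have : hat lam = μ := by
          funext i
          cases i with
          | zero => rw [h0]; rfl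
          | succ i => rw [hat_succ, hl, haa]
        rw [← this]
        exact hc lam
  intro μ
  by_cases h : Valid N μ
  · obtain ⟨h0, M, h1, h2⟩ := h
    exact key M _ μ h0 h1 h2 rfl
  · exact ha μ h

theorem exp_exists {N : ℕ} (f : (ℕ → ℕ) → ℚ) (ha : ∀ μ, ¬ Valid N μ → f μ = 0)
    (hb : ∀ μ k, 1 ≤ k → f (μ ∘ Equiv.swap k (k + 1)) = f μ) :
    ∃ c : Nat.Partition N → ℚ, ∀ μ, f μ = ∑ nu, c nu * schurFn nu μ := by
  let T : (Nat.Partition N → ℚ) →ₗ[ℚ] (Nat.Partition N → ℚ) :=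
    { toFun := fun c lam => ∑ nu, c nu * schurFn nu (hat lam)
      map_add' := by
        intro x y
        funext lam
        simp only [Pi.add_apply, add_mul, Finset.sum_add_distrib]
      map_smul' := by
        intro t x
        funext lam
        simp only [Pi.smul_apply, smul_eq_mul, mul_assoc, Finset.mul_sum, RingHom.id_apply] }
  have hinj : Function.Injective T := by
    rw [injective_iff_map_eq_zero]
    intro c hc
    funext nu
    exact tri N c (fun lam _ => congrFun hc lam) nu (row_zero nu)
  obtain ⟨c, hc⟩ := (LinearMap.injective_iff_surjective.mp hinj) (fun lam => f (hat lam))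
  refine ⟨c, fun μ => ?_⟩
  have := zero_of_hat (N := N) (fun μ => f μ - ∑ nu, c nu * schurFn nu μ)
    (fun μ hμ => by
      have : ∀ nu : Nat.Partition N, schurFn nu μ = 0 := fun nu => schur_valid nu μ hμ
      simp [ha μ hμ, this])
    (fun μ k hk => by simp only [hb μ k hk, schur_swap _ _ _ hk])
    (fun nu => by
      have := congrFun hc nu
      simp only [T, LinearMap.coe_mk, AddHom.coe_mk] at this
      rw [this, sub_self]) μ
  exact sub_eq_zero.mp this

/-! ### Properties of chromatic symmetric functions -/

theorem X_valid {V : Type*} [Fintype V] (G : SimpleGraph V) (μ : ℕ → ℕ)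
    (h : ¬ Valid (Fintype.card V) μ) : XCoeff G μ = 0 := by
  unfold XCoeff
  rw [Nat.cast_eq_zero]
  have : IsEmpty {f : V → ℕ //
      IsProperColoring G f ∧ ∀ i, Nat.card {v : V // f v = i} = μ i} := by
    constructor
    rintro ⟨f, hf, hw⟩
    apply h
    apply valid_of_fibers Finset.univ f μ (fun c _ => hf.1 c)
    intro i
    rw [← hw i]
    symm
    apply Nat.subtype_card
    simp
  exact Nat.card_of_isEmpty

theorem X_swap {V : Type*} [Fintype V] (G : SimpleGraph V) (μ : ℕ → ℕ) (k : ℕ) (hk : 1 ≤ k) :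
    XCoeff G (μ ∘ Equiv.swap k (k + 1)) = XCoeff G μ := by
  unfold XCoeff
  congr 1
  have main : ∀ (f : V → ℕ) (μ : ℕ → ℕ), (IsProperColoring G f ∧
      ∀ i, Nat.card {v : V // f v = i} = μ i) → (IsProperColoring G (Equiv.swap k (k + 1) ∘ f) ∧
      ∀ i, Nat.card {v : V // (Equiv.swap k (k + 1) ∘ f) v = i}
        = (μ ∘ Equiv.swap k (k + 1)) i) := by
    rintro f μ ⟨⟨h1, h2⟩, h3⟩
    refine ⟨⟨?_, ?_⟩, ?_⟩
    · intro v
      have := h1 v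
      rw [Function.comp_apply, Equiv.swap_apply_def]
      split_ifs <;> omega
    · intro u v huv he
      exact h2 u v huv ((Equiv.swap k (k + 1)).injective he)
    · intro i
      rw [Function.comp_apply, ← h3]
      apply Nat.card_congr
      apply Equiv.subtypeEquivRight
      intro v
      rw [Function.comp_apply]
      constructor
      · intro h; rw [← h]; simp
      · intro h; rw [h]; simp
  refine Nat.card_congr
    { toFun := fun f => ⟨Equiv.swap k (k + 1) ∘ f.1, ?_⟩
      invFun := fun f => ⟨Equiv.swap k (k + 1) ∘ f.1, main f.1 μ f.2⟩
      left_inv := ?_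
      right_inv := ?_ }
  · have := main f.1 _ f.2
    rwa [swap_swap'] at this
  · rintro ⟨f, hf⟩
    apply Subtype.ext
    funext v
    simp
  · rintro ⟨f, hf⟩
    apply Subtype.ext
    funext v
    simp

/-! ### Colorings of the generalized net -/

theorem adj_ll {n : ℕ} (i j : Fin n) (h : i ≠ j) :
    (genNet n n).Adj (Sum.inl i) (Sum.inl j) := by
  simp [genNet, SimpleGraph.fromRel_adj, h]

theorem adj_lr {n : ℕ} (i : Fin n) : (genNet n n).Adj (Sum.inl i) (Sum.inr i) := by
  simp [genNet, SimpleGraph.fromRel_adj]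

theorem proper_iff {n : ℕ} (f : Fin n ⊕ Fin n → ℕ) : IsProperColoring (genNet n n) f ↔
    (∀ v, 0 < f v) ∧ Function.Injective (f ∘ Sum.inl) ∧
      ∀ j, f (Sum.inr j) ≠ f (Sum.inl j) := by
  unfold IsProperColoring
  apply and_congr_right
  intro _
  constructor
  · intro h
    refine ⟨?_, fun j => (h _ _ (adj_lr j)).symm⟩
    intro i j hij
    by_contra hne
    exact h _ _ (adj_ll i j hne) hij
  · rintro ⟨h1, h2⟩ u v huv he
    rcases u with i | i <;> rcases v with j | j
    · have := h1 he
      subst this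
      exact (genNet n n).loopless.irrefl _ huv
    · simp only [genNet, SimpleGraph.fromRel_adj, or_false] at huv
      have : i = j := Fin.ext huv.2
      subst this
      exact h2 i he.symm
    · simp only [genNet, SimpleGraph.fromRel_adj, false_or] at huv
      have : j = i := Fin.ext huv.2
      subst this
      exact h2 j he
    · simp [genNet, SimpleGraph.fromRel_adj] at huv

theorem cnt_split {n : ℕ} (f : Fin n ⊕ Fin n → ℕ) (i : ℕ) :
    Nat.card {v // f v = i} = (Finset.univ.filter (fun j => f (Sum.inl j) = i)).card +
      (Finset.univ.filter (fun j => f (Sum.inr j) = i)).card := by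
  rw [Nat.subtype_card (Finset.univ.filter (fun v => f v = i)) (by simp)]
  rw [Finset.card_filter, Finset.card_filter, Finset.card_filter, Fintype.sum_sum_type]

theorem perm_cnt {n : ℕ} (σ : Equiv.Perm (Fin n)) (i : ℕ) :
    (Finset.univ.filter (fun j => (σ j : ℕ) + 1 = i)).card = ones n i := by
  rw [Finset.card_filter, Equiv.sum_comp σ (fun j : Fin n => if (j : ℕ) + 1 = i then 1 else 0)]
  unfold ones
  split_ifs with h
  · rw [Finset.sum_eq_single (⟨i - 1, by omega⟩ : Fin n)]
    · rw [if_pos]; simp; omega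
    · intro b _ hb
      rw [if_neg]
      intro h'
      apply hb
      apply Fin.ext
      simp; omega
    · simp
  · apply Finset.sum_eq_zero
    intro j _
    rw [if_neg]
    have := j.2
    omega

/-- The finite set parametrizing the relevant colorings. -/
noncomputable def Qset (n m : ℕ) : Finset (Σ _ : Equiv.Perm (Fin n), Fin n → ℕ) :=
  Finset.univ.sigma fun σ =>
    Fintype.piFinset fun j => (Finset.Icc 1 m).erase ((σ j : ℕ) + 1)

theorem mem_Qset {n m : ℕ} (q : Σ _ : Equiv.Perm (Fin n), Fin n → ℕ) :
    q ∈ Qset n m ↔ ∀ j, q.2 j ≠ (q.1 j : ℕ) + 1 ∧ 1 ≤ q.2 j ∧ q.2 j ≤ m := by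
  unfold Qset
  simp [Finset.mem_sigma, Fintype.mem_piFinset]

theorem card_Qset (n m : ℕ) (h : m ≤ n) :
    ((Qset n m).card : ℚ) = n.factorial * ((m : ℚ) ^ (n - m) * ((m : ℚ) - 1) ^ m) := by
  unfold Qset
  have h1 : ∀ σ : Equiv.Perm (Fin n),
      (Fintype.piFinset fun j => (Finset.Icc 1 m).erase ((σ j : ℕ) + 1)).card
      = (m - 1) ^ m * m ^ (n - m) := by
    intro σ
    rw [Fintype.card_piFinset]
    have h2 : ∀ j : Fin n, ((Finset.Icc 1 m).erase ((σ j : ℕ) + 1)).card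
        = (fun j : Fin n => if (j : ℕ) < m then m - 1 else m) (σ j) := by
      intro j
      dsimp only
      split_ifs with hj
      · rw [Finset.card_erase_of_mem (Finset.mem_Icc.mpr (by omega))]
        simp
      · rw [Finset.erase_eq_of_notMem (by rw [Finset.mem_Icc]; omega)]
        simp
    rw [Finset.prod_congr rfl (fun j _ => h2 j),
      Equiv.prod_comp σ (fun j : Fin n => if (j : ℕ) < m then m - 1 else m)]
    rw [← Finset.prod_range (fun i => if i < m then m - 1 else m)]
    obtain ⟨d, rfl⟩ := Nat.exists_eq_add_of_le h
    rw [Finset.prod_range_add]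
    congr 1
    · rw [Finset.prod_congr rfl (g := fun _ => m - 1)]
      · simp
      · intro i hi
        rw [if_pos (Finset.mem_range.mp hi)]
    · simp
  rw [Finset.card_sigma, Finset.sum_congr rfl (fun σ _ => h1 σ)]
  rw [Finset.sum_const, Finset.card_univ, Fintype.card_perm, Fintype.card_fin]
  cases m with
  | zero => simp
  | succ m => push_cast; simp; left; ring

/-- The coloring attached to a parameter. -/
def colq {n : ℕ} (q : Σ _ : Equiv.Perm (Fin n), Fin n → ℕ) : Fin n ⊕ Fin n → ℕ :=
  Sum.elim (fun j => (q.1 j : ℕ) + 1) q.2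

/-- The pendant weight. -/
noncomputable def betaq {n : ℕ} (q : Σ _ : Equiv.Perm (Fin n), Fin n → ℕ) (i : ℕ) : ℕ :=
  (Finset.univ.filter (fun j => q.2 j = i)).card

theorem X_fiber {n m : ℕ} (hm : m ≤ n) (β : ℕ → ℕ) (hβ : ∀ i, β i ≠ 0 → 1 ≤ i ∧ i ≤ m) :
    XCoeff (genNet n n) (fun i => ones n i + β i)
      = ((Qset n m).filter (fun q => betaq q = β)).card := by
  unfold XCoeff
  congr 1
  have hfwd : ∀ q ∈ (Qset n m).filter (fun q => betaq q = β),
      IsProperColoring (genNet n n) (colq q) ∧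
      ∀ i, Nat.card {v // colq q v = i} = ones n i + β i := by
    intro q hq
    rw [Finset.mem_filter, mem_Qset] at hq
    obtain ⟨hq, hb⟩ := hq
    constructor
    · rw [proper_iff]
      refine ⟨?_, ?_, ?_⟩
      · rintro (j | j)
        · exact Nat.succ_pos _
        · exact (hq j).2.1
      · intro i j hij
        apply q.1.injective
        apply Fin.ext
        exact Nat.succ_injective hij
      · exact fun j => (hq j).1
    · intro i
      rw [cnt_split, ← hb]
      congr 1
      exact perm_cnt q.1 i
  have hbij : Function.Bijective (fun q : {q // q ∈ (Qset n m).filter (fun q => betaq q = β)} =>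
      (⟨colq q.1, hfwd q.1 q.2⟩ : {f : Fin n ⊕ Fin n → ℕ // IsProperColoring (genNet n n) f ∧
        ∀ i, Nat.card {v // f v = i} = ones n i + β i})) := by
    constructor
    · rintro ⟨⟨σ, p⟩, hq⟩ ⟨⟨τ, p'⟩, hq'⟩ h
      have h' : colq ⟨σ, p⟩ = colq ⟨τ, p'⟩ := congrArg Subtype.val h
      have h1 : σ = τ := by
        ext j
        have := congrFun h' (Sum.inl j)
        simp only [colq, Sum.elim_inl] at this
        omega
      have h2 : p = p' := by
        funext j
        exact congrFun h' (Sum.inr j)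
      subst h1
      subst h2
      rfl
    · rintro ⟨f, hf, hw⟩
      have hf' := (proper_iff f).mp hf
      have hpos : ∀ v, ones n (f v) + β (f v) ≠ 0 := by
        intro v h
        rw [← hw (f v)] at h
        rcases Nat.card_eq_zero.mp h with h2 | h2
        · exact h2.false ⟨v, rfl⟩
        · exact h2.not_finite inferInstance
      have hlt : ∀ v, 1 ≤ f v ∧ f v ≤ n := by
        intro v
        by_contra h
        apply hpos v
        have : β (f v) = 0 := by
          by_contra h'
          have := hβ _ h'
          omega
        rw [this]
        unfold ones
        rw [if_neg h]
      have hinj : Function.Injective (fun j : Fin n =>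
          (⟨f (Sum.inl j) - 1, by have := hlt (Sum.inl j); omega⟩ : Fin n)) := by
        intro i j hij
        apply hf'.2.1
        have h1 := hlt (Sum.inl i)
        have h2 := hlt (Sum.inl j)
        simp only [Fin.mk.injEq] at hij
        simp only [Function.comp_apply]
        omega
      let σ : Equiv.Perm (Fin n) := Equiv.ofBijective _ (Finite.injective_iff_bijective.mp hinj)
      have hσ : ∀ j, (σ j : ℕ) + 1 = f (Sum.inl j) := by
        intro j
        have := hlt (Sum.inl j)
        change f (Sum.inl j) - 1 + 1 = _
        omega
      have hbeta : ∀ i, (Finset.univ.filter (fun j => f (Sum.inr j) = i)).card = β i := by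
        intro i
        have h1 := hw i
        rw [cnt_split] at h1
        simp only [← hσ] at h1
        rw [perm_cnt] at h1
        omega
      refine ⟨⟨⟨σ, fun j => f (Sum.inr j)⟩, ?_⟩, ?_⟩
      · rw [Finset.mem_filter, mem_Qset]
        refine ⟨fun j => ⟨?_, ?_⟩, ?_⟩
        · dsimp only
          rw [hσ]
          exact hf'.2.2 j
        · apply hβ
          rw [← hbeta]
          exact (Finset.card_pos.mpr ⟨j, by simp⟩).ne'
        · funext i
          exact hbeta i
      · apply Subtype.ext
        funext v
        rcases v with j | j
        · exact hσ j
        · rfl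
  rw [← Nat.card_congr (Equiv.ofBijective _ hbij), Nat.card_eq_fintype_card, Fintype.card_coe]

theorem X_sum {n m : ℕ} (hm : m ≤ n) :
    ∑ β ∈ Finset.piAntidiag (Finset.Icc 1 m) n, XCoeff (genNet n n) (fun i => ones n i + β i)
      = n.factorial * ((m : ℚ) ^ (n - m) * ((m : ℚ) - 1) ^ m) := by
  rw [← card_Qset n m hm, Finset.card_eq_sum_card_fiberwise (f := betaq)
    (t := Finset.piAntidiag (Finset.Icc 1 m) n)]
  · push_cast
    apply Finset.sum_congr rfl
    intro β hβ
    rw [Finset.mem_piAntidiag] at hβ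
    exact X_fiber hm β (fun i hi => Finset.mem_Icc.mp (hβ.2 i hi))
  · intro q hq
    rw [Finset.mem_coe, mem_Qset] at hq
    rw [Finset.mem_coe, Finset.mem_piAntidiag]
    constructor
    · unfold betaq
      rw [← Finset.card_eq_sum_card_fiberwise]
      · simp
      · intro j _
        simp only [Finset.coe_Icc, Set.mem_Icc]
        exact (hq j).2
    · intro i hi
      unfold betaq at hi
      obtain ⟨j, hj⟩ := Finset.card_ne_zero.mp hi
      rw [Finset.mem_filter] at hj
      rw [← hj.2, Finset.mem_Icc]
      exact (hq j).2

theorem X_few {n : ℕ} (hn : 1 ≤ n) (μ : ℕ → ℕ) (hμ : ∀ i, n ≤ i → μ i = 0) :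
    XCoeff (genNet n n) μ = 0 := by
  unfold XCoeff
  rw [Nat.cast_eq_zero]
  have : IsEmpty {f : Fin n ⊕ Fin n → ℕ //
      IsProperColoring (genNet n n) f ∧ ∀ i, Nat.card {v // f v = i} = μ i} := by
    constructor
    rintro ⟨f, hf, hw⟩
    rw [proper_iff] at hf
    have hlt : ∀ v, f v < n := by
      intro v
      by_contra h
      have h1 := hw (f v)
      rw [hμ _ (by omega)] at h1
      rcases Nat.card_eq_zero.mp h1 with h2 | h2
      · exact h2.false ⟨v, rfl⟩
      · exact h2.not_finite inferInstance
    have h3 : (Finset.univ.image (f ∘ Sum.inl)).card = n := by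
      rw [Finset.card_image_of_injective _ hf.2.1]; simp
    have h4 : Finset.univ.image (f ∘ Sum.inl) ⊆ Finset.Icc 1 (n - 1) := by
      intro i hi
      rw [Finset.mem_image] at hi
      obtain ⟨j, _, rfl⟩ := hi
      have := hlt (Sum.inl j)
      have := hf.1 (Sum.inl j)
      rw [Finset.mem_Icc, Function.comp_apply]
      omega
    have := Finset.card_le_card h4
    rw [h3] at this
    simp at this
    omega
  exact Nat.card_of_isEmpty

theorem row_twoOne (n i : ℕ) : row (twoOne n 0) i = if i < n then 2 else 0 := by
  have h : plist (twoOne n 0) = List.replicate n 2 := by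
    rw [← List.perm_replicate, ← Multiset.coe_eq_coe, coe_plist]
    simp only [twoOne, Multiset.replicate_zero, add_zero, Multiset.coe_replicate]
  rw [row_apply', h]
  split_ifs with hi
  · rw [List.getD_eq_getElem _ _ (by simpa using hi)]
    simp
  · exact getD_zero_of_le _ _ (by simpa using hi)

theorem schur_sum {n m : ℕ} (hm : m ≤ n) (nu : Nat.Partition (2 * n + 0))
    (h1 : row nu n = 0) (h2 : row nu (n - 1) ≠ 0) (hn : 1 ≤ n) :
    (∀ i, (row nu - col n) (i + 1) ≤ (row nu - col n) i) ∧ sz (row nu - col n) = n ∧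
    ∑ β ∈ Finset.piAntidiag (Finset.Icc 1 m) n, schurFn nu (fun i => ones n i + β i)
      = ssn m (row nu - col n) := by
  have hanti : Antitone (row nu) := antitone_nat_of_succ_le (row_anti nu)
  have hz : ∀ i, n ≤ i → row nu i = 0 := fun i hi => Nat.le_zero.mp ((hanti hi).trans h1.le)
  have hp : ∀ i, i < n → 1 ≤ row nu i := fun i hi =>
    (Nat.one_le_iff_ne_zero.mpr h2).trans (hanti (by omega))
  have hs : sz (row nu - col n) = n := by
    have := sz_sub_col hp
    rw [sz_row] at this
    omega
  have ha : ∀ i, (row nu - col n) (i + 1) ≤ (row nu - col n) i := by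
    intro i
    rw [Finsupp.tsub_apply, Finsupp.tsub_apply, col_apply, col_apply]
    have := row_anti nu i
    by_cases hi : i + 1 < n
    · rw [if_pos hi, if_pos (by omega)]; omega
    · rw [hz (i + 1) (by omega)]; omega
  refine ⟨ha, hs, ?_⟩
  rw [← sum_kos m (row nu - col n), hs]
  push_cast
  apply Finset.sum_congr rfl
  intro β hβ
  rw [Finset.mem_piAntidiag] at hβ
  have hb : ∀ i, ¬ (1 ≤ i ∧ i ≤ m) → β i = 0 := by
    intro i hi
    by_contra hc
    exact hi (Finset.mem_Icc.mp (hβ.2 i hc))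
  rw [schur_eq_kos nu _ n, kos_col β n _ hp hz, kos_extend' hm (fun i hi => hb i (by omega)) ha]
  · rw [hb 0 (by omega)]; simp [ones]
  · intro i hi
    rw [hb i (by omega)]; simp [ones]; omega

theorem schur_sum_zero {n m : ℕ} (hm : m ≤ n) (nu : Nat.Partition (2 * n + 0))
    (h1 : row nu n ≠ 0) :
    ∑ β ∈ Finset.piAntidiag (Finset.Icc 1 m) n, schurFn nu (fun i => ones n i + β i) = 0 := by
  apply Finset.sum_eq_zero
  intro β hβ
  rw [Finset.mem_piAntidiag] at hβ
  have hb : ∀ i, ¬ (1 ≤ i ∧ i ≤ m) → β i = 0 := by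
    intro i hi
    by_contra hc
    exact hi (Finset.mem_Icc.mp (hβ.2 i hc))
  rw [schur_eq_kos nu _ n]
  · rw [Nat.cast_eq_zero]
    by_contra hc
    exact h1 (kos_rows n _ hc n le_rfl)
  · rw [hb 0 (by omega)]; simp [ones]
  · intro i hi
    rw [hb i (by omega)]; simp [ones]; omega

theorem coeff_value {n : ℕ} (hn : 1 ≤ n) (c : Nat.Partition (2 * n + 0) → ℚ)
    (hc : ∀ μ, XCoeff (genNet n n) μ = ∑ nu, c nu * schurFn nu μ) :
    c (twoOne n 0) = if Even n then (n.factorial : ℚ) else 0 := by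
  have hfew : ∀ nu : Nat.Partition (2 * n + 0), row nu (n - 1) = 0 → c nu = 0 := by
    intro nu h
    have hanti : Antitone (row nu) := antitone_nat_of_succ_le (row_anti nu)
    refine tri (n - 1) c ?_ nu (fun i hi => Nat.le_zero.mp ((hanti hi).trans h.le))
    intro lam hl
    rw [← hc, X_few hn]
    intro i hi
    obtain ⟨k, rfl⟩ : ∃ k, i = k + 1 := ⟨i - 1, by omega⟩
    rw [hat_succ, hl k (by omega)]
  set c' : Nat.Partition (2 * n + 0) → ℚ := fun nu =>
    if row nu n = 0 ∧ row nu (n - 1) ≠ 0 then c nu else 0 with hc'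
  have key : ∀ m, m ≤ n → (n.factorial : ℚ) * (qpoly n).eval (m : ℚ)
      = ∑ nu, c' nu * (ssn m (row nu - col n) : ℚ) := by
    intro m hm
    rw [qpoly_nat n m hm, ← X_sum hm]
    simp only [hc]
    rw [Finset.sum_comm]
    apply Finset.sum_congr rfl
    intro nu _
    rw [← Finset.mul_sum]
    by_cases h2 : row nu (n - 1) = 0
    · simp [hc', h2, hfew nu h2]
    by_cases h1 : row nu n = 0
    · rw [(schur_sum hm nu h1 h2 hn).2.2]
      simp [hc', h1, h2]
    · rw [schur_sum_zero hm nu h1]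
      simp [hc', h1]
  have h1 : vev n (fun m => ∑ i ∈ {()}, (n.factorial : ℚ) * (qpoly n).eval (m : ℚ))
      = vev n (fun m => ∑ nu, c' nu * (ssn m (row nu - col n) : ℚ)) := by
    apply vev_congr
    intro m hm
    rw [Finset.sum_singleton]
    exact key m hm
  rw [vev_sum _ n (fun _ => (n.factorial : ℚ)) (fun _ m => (qpoly n).eval (m : ℚ)),
    vev_sum _ n c' (fun nu m => (ssn m (row nu - col n) : ℚ)), Finset.sum_singleton,
    vev_poly n _ (qpoly_deg n), qpoly_neg_one] at h1
  have ht : row (twoOne n 0) - col n = col n := by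
    ext i
    rw [Finsupp.tsub_apply, row_twoOne, col_apply]
    split_ifs <;> rfl
  have ht1 : row (twoOne n 0) n = 0 := by rw [row_twoOne]; simp
  have ht2 : row (twoOne n 0) (n - 1) ≠ 0 := by rw [row_twoOne, if_pos (by omega)]; simp
  rw [Finset.sum_eq_single (twoOne n 0)] at h1
  · obtain ⟨ha, hs, _⟩ := schur_sum (le_refl n) (twoOne n 0) ht1 ht2 hn
    rw [vev_ssn n _ ha hs.le, hs, if_pos ht] at h1
    simp only [hc', ht1, ht2, ne_eq, not_false_eq_true, and_self, if_true] at h1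
    split_ifs at h1 ⊢ with he
    · rw [he.neg_one_pow] at h1
      linarith
    · rw [(Nat.not_even_iff_odd.mp he).neg_one_pow] at h1
      linarith
  · intro nu _ hne
    by_cases h : row nu n = 0 ∧ row nu (n - 1) ≠ 0
    · obtain ⟨ha, hs, _⟩ := schur_sum (le_refl n) nu h.1 h.2 hn
      rw [vev_ssn n _ ha hs.le, hs, if_neg, mul_zero]
      intro he
      apply hne
      apply row_inj
      ext i
      have hanti : Antitone (row nu) := antitone_nat_of_succ_le (row_anti nu)
      have e := DFunLike.congr_fun he i
      rw [Finsupp.tsub_apply, col_apply] at e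
      rw [row_twoOne]
      split_ifs at e ⊢ with hi
      · omega
      · omega
    · simp only [hc', if_neg h, zero_mul]
  · simp

theorem fCD_value {n : ℕ} (hn : 1 ≤ n) : fCD n 0 = if Even n then (n.factorial : ℚ) else 0 := by
  have hcard : Fintype.card (Fin n ⊕ Fin n) = 2 * n + 0 := by simp; omega
  have hex : ∃ c : Nat.Partition (2 * n + 0) →₀ ℚ, ∀ μ, XCoeff (genNet (n + 0) n) μ
      = c.sum fun ν a => a * schurFn ν μ := by
    obtain ⟨c, hc⟩ := exp_exists (N := 2 * n + 0) (XCoeff (genNet n n))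
      (fun μ hμ => X_valid _ μ (by rw [hcard]; exact hμ)) (fun μ k hk => X_swap _ μ k hk)
    refine ⟨Finsupp.equivFunOnFinite.symm c, fun μ => ?_⟩
    rw [Finsupp.sum_fintype _ _ (by simp)]
    exact hc μ
  unfold fCD sCoeff
  rw [dif_pos hex]
  apply coeff_value hn (fun nu => hex.choose nu)
  intro μ
  have := hex.choose_spec μ
  rw [Finsupp.sum_fintype _ _ (by simp)] at this
  exact this

/-- For `n ≥ 3`: `f(n,0) = n·(n-1)·f(n-2,0)`. -/
theorem fCD_two_step_recurrence (n : ℕ) (hn : 3 ≤ n) :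
    fCD n 0 = (n : ℚ) * ((n : ℚ) - 1) * fCD (n - 2) 0 := by
  obtain ⟨k, rfl⟩ : ∃ k, n = k + 2 := ⟨n - 2, by omega⟩
  rw [fCD_value (by omega), fCD_value (by omega), Nat.add_sub_cancel]
  by_cases h : Even k
  · rw [if_pos h, if_pos (by simpa [Nat.even_add] using h), Nat.factorial_succ, Nat.factorial_succ]
    push_cast
    ring
  · rw [if_neg h, if_neg (by simpa [Nat.even_add] using h), mul_zero]
end
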